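/- arXiv:2007.02740 — 2 statements merged into one kernel-verified Lean document; each statement's English description precedes it below -/
import Mathlib

section
/- Structure theorem: For every η > 0 there exist c ∈ ℕ and κ > 0 such that the following holds. Let f : {0,1}^m → {0,1} be a non-constant monotone function, S ⊆ {0,1}^ℓ × 𝒪 a search problem, and gd : {0,1}^t × {0,1}^t → {0,1} a gadget with disc(gd) ≤ 2^{−η·t} and t ≥ c·log₂(m·ℓ). Fix any protocol Π that solves mKW_f ⊛ (S◇gd). Then for every live transcript π₁ of Π there exists a suffix π₂ of length at least κ·Q(S)·t such that the concatenation π₁∘π₂ is a transcript of Π. -/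
open Classical

noncomputable section

/-! ### Deterministic communication protocols -/

/-- A deterministic communication protocol: a finite binary protocol tree whose
leaves are labeled by outputs in `O`.  At a `nodeA` vertex Alice sends a bit
(computed from her input), at a `nodeB` vertex Bob sends a bit. -/
inductive Protocol (X Y O : Type) : Type where
  | leaf : O → Protocol X Y O
  | nodeA : (X → Bool) → Protocol X Y O → Protocol X Y O → Protocol X Y O
  | nodeB : (Y → Bool) → Protocol X Y O → Protocol X Y O → Protocol X Y O

namespace Protocol

variable {X Y O : Type}

/-- The output of the protocol on an input pair. -/
def run : Protocol X Y O → X → Y → O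
  | leaf o, _, _ => o
  | nodeA h p0 p1, x, y => if h x then run p1 x y else run p0 x y
  | nodeB h p0 p1, x, y => if h y then run p1 x y else run p0 x y

/-- Depth (communication complexity) of a protocol tree. -/
def depth : Protocol X Y O → ℕ
  | leaf _ => 0
  | nodeA _ p0 p1 => max (depth p0) (depth p1) + 1
  | nodeB _ p0 p1 => max (depth p0) (depth p1) + 1

/-- Number of leaves (protocol size). -/
def leaves : Protocol X Y O → ℕ
  | leaf _ => 1
  | nodeA _ p0 p1 => leaves p0 + leaves p1
  | nodeB _ p0 p1 => leaves p0 + leaves p1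

/-- `followsA p π x` : Alice's input `x` is consistent with the partial transcript `π`,
i.e. `x` belongs to the Alice-side `𝒳_π` of the rectangle associated with the vertex `π`. -/
def followsA : Protocol X Y O → List Bool → X → Prop
  | _, [], _ => True
  | leaf _, _ :: _, _ => False
  | nodeA h p0 p1, b :: rest, x =>
      h x = b ∧ (if b then followsA p1 rest x else followsA p0 rest x)
  | nodeB _ p0 p1, b :: rest, x =>
      if b then followsA p1 rest x else followsA p0 rest x

/-- `followsB p π y` : Bob's input `y` is consistent with the partial transcript `π`,
i.e. `y` belongs to the Bob-side `𝒴_π` of the rectangle associated with the vertex `π`. -/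
def followsB : Protocol X Y O → List Bool → Y → Prop
  | _, [], _ => True
  | leaf _, _ :: _, _ => False
  | nodeA _ p0 p1, b :: rest, y =>
      if b then followsB p1 rest y else followsB p0 rest y
  | nodeB h p0 p1, b :: rest, y =>
      h y = b ∧ (if b then followsB p1 rest y else followsB p0 rest y)

/-- The subtree of the protocol reached by following a partial transcript. -/
def subtree : Protocol X Y O → List Bool → Option (Protocol X Y O)
  | p, [] => some p
  | leaf _, _ :: _ => none
  | nodeA _ p0 p1, b :: rest => if b then subtree p1 rest else subtree p0 rest
  | nodeB _ p0 p1, b :: rest => if b then subtree p1 rest else subtree p0 rest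

/-- `π` is a (partial or full) transcript of the protocol, i.e. a vertex of the protocol tree. -/
def IsTranscript (p : Protocol X Y O) (π : List Bool) : Prop :=
  (subtree p π).isSome = true

/-- `π` is a full transcript of the protocol, i.e. a root-to-leaf path. -/
def IsFullTranscript (p : Protocol X Y O) (π : List Bool) : Prop :=
  ∃ o : O, subtree p π = some (leaf o)

end Protocol

/-- A protocol solves a communication problem `S` if on every input pair it
outputs a valid output. -/
def Solves {X Y O : Type} (p : Protocol X Y O) (S : X → Y → O → Prop) : Prop :=
  ∀ x y, S x y (p.run x y)

/-- `L(S)`: minimal number of leaves of a protocol solving `S`. -/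
def Lsize {X Y O : Type} (S : X → Y → O → Prop) : ℕ :=
  sInf {k | ∃ p : Protocol X Y O, Solves p S ∧ p.leaves = k}

/-- `CC(S)`: the deterministic communication complexity (minimal depth) of `S`. -/
def CC {X Y O : Type} (S : X → Y → O → Prop) : ℕ :=
  sInf {k | ∃ p : Protocol X Y O, Solves p S ∧ p.depth = k}

/-! ### Decision trees and query complexity -/

inductive DTree (ι O : Type) : Type where
  | leaf : O → DTree ι O
  | node : ι → DTree ι O → DTree ι O → DTree ι O

namespace DTree

variable {ι O : Type}

def run : DTree ι O → (ι → Bool) → O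
  | leaf o, _ => o
  | node i t0 t1, z => if z i then run t1 z else run t0 z

def depth : DTree ι O → ℕ
  | leaf _ => 0
  | node _ t0 t1 => max (depth t0) (depth t1) + 1

end DTree

def DSolves {ι O : Type} (T : DTree ι O) (S : (ι → Bool) → O → Prop) : Prop :=
  ∀ z, S z (T.run z)

/-- `Q(S)`: the deterministic query complexity of the search problem `S`. -/
def Qcomplexity {ι O : Type} (S : (ι → Bool) → O → Prop) : ℕ :=
  sInf {k | ∃ T : DTree ι O, DSolves T S ∧ T.depth = k}

/-! ### Monotone Karchmer–Wigderson relations -/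

/-- The monotone KW relation of a rectangle `A × B`: find `i` with `x i > y i`. -/
def mKWrect {ι : Type} (A B : Set (ι → Bool)) : ↥A → ↥B → ι → Prop :=
  fun x y i => x.val i = true ∧ y.val i = false

/-- `mL(A × B)`: the monotone formula complexity of the rectangle `A × B`. -/
def mL {ι : Type} (A B : Set (ι → Bool)) : ℕ := Lsize (mKWrect A B)

/-- The monotone KW relation of a monotone function `f`. -/
def mKW {ι : Type} (f : (ι → Bool) → Bool) :
    {x : ι → Bool // f x = true} → {y : ι → Bool // f y = false} → ι → Prop :=
  fun x y i => x.val i = true ∧ y.val i = false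

/-! ### Lifted search problems, discrepancy, reductions -/

/-- The lifted search problem `S ◇ gd`. -/
def liftSP {ι Λ O : Type} (S : (ι → Bool) → O → Prop) (gd : Λ → Λ → Bool) :
    (ι → Λ) → (ι → Λ) → O → Prop :=
  fun x y o => S (fun i => gd (x i) (y i)) o

/-- The discrepancy of a gadget `gd : {0,1}^t × {0,1}^t → {0,1}`. -/
def disc {t : ℕ} (gd : (Fin t → Bool) → (Fin t → Bool) → Bool) : ℝ :=
  sSup {r : ℝ | ∃ A B : Finset (Fin t → Bool),
    r = |((((A ×ˢ B).filter fun uv => gd uv.1 uv.2 = false).card : ℝ) -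
          (((A ×ˢ B).filter fun uv => gd uv.1 uv.2 = true).card : ℝ))| /
        ((2 ^ t : ℝ) * (2 ^ t : ℝ))}

/-- A (rectangular) reduction between communication problems. -/
def Reduces {X Y O X' Y' O' : Type}
    (S : X → Y → O → Prop) (S' : X' → Y' → O' → Prop) : Prop :=
  ∃ (RA : X → X') (RB : Y → Y') (Rout : O' → O),
    ∀ x y o', S' (RA x) (RB y) o' → S x y (Rout o')

/-- An injective reduction between communication problems. -/
def ReducesInj {X Y O X' Y' O' : Type}
    (S : X → Y → O → Prop) (S' : X' → Y' → O' → Prop) : Prop :=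
  ∃ (RA : X → X') (RB : Y → Y') (Rout : O' → O),
    Function.Injective RA ∧ Function.Injective RB ∧
    ∀ x y o', S' (RA x) (RB y) o' → S x y (Rout o')

/-! ### Compositions -/

/-- `mKW_f ◇ mKW_g := mKW_{f ◇ g}` : Alice gets `X ∈ (f◇g)⁻¹(1)`, Bob gets
`Y ∈ (f◇g)⁻¹(0)`, and they must find an entry `(i,j)` with `X i j > Y i j`. -/
def diamondKW {m : ℕ} {ι : Type} (f : (Fin m → Bool) → Bool) (g : (ι → Bool) → Bool) :
    {X : Fin m → ι → Bool // f (fun i => g (X i)) = true} →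
    {Y : Fin m → ι → Bool // f (fun i => g (Y i)) = false} →
    (Fin m × ι) → Prop :=
  fun X Y e => X.val e.1 e.2 = true ∧ Y.val e.1 e.2 = false

/-- `mKW_f ⊛ mKW_g` : same inputs as `mKW_f ◇ mKW_g`, but valid outputs are entries
`(i,j)` with `a_i > b_i` and `X i j > Y i j`, where `a_i = g(X_i)`, `b_i = g(Y_i)`. -/
def starKW {m : ℕ} {ι : Type} (f : (Fin m → Bool) → Bool) (g : (ι → Bool) → Bool) :
    {X : Fin m → ι → Bool // f (fun i => g (X i)) = true} →
    {Y : Fin m → ι → Bool // f (fun i => g (Y i)) = false} →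
    (Fin m × ι) → Prop :=
  fun X Y e => g (X.val e.1) = true ∧ g (Y.val e.1) = false ∧
    X.val e.1 e.2 = true ∧ Y.val e.1 e.2 = false

/-- `mKW_f ⊛ (S ◇ gd)` : Alice gets `X ∈ Λ^{m×ℓ}` and `a ∈ f⁻¹(1)`, Bob gets
`Y ∈ Λ^{m×ℓ}` and `b ∈ f⁻¹(0)`; valid outputs are pairs `(i,o)` with `a_i > b_i`
and `o` a valid output of `S ◇ gd` on the rows `(X_i, Y_i)`. -/
def starLift {m ℓ : ℕ} {Λ O : Type} (f : (Fin m → Bool) → Bool)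
    (S : (Fin ℓ → Bool) → O → Prop) (gd : Λ → Λ → Bool) :
    ((Fin m → Fin ℓ → Λ) × {a : Fin m → Bool // f a = true}) →
    ((Fin m → Fin ℓ → Λ) × {b : Fin m → Bool // f b = false}) →
    (Fin m × O) → Prop :=
  fun Xa Yb io =>
    Xa.2.val io.1 = true ∧ Yb.2.val io.1 = false ∧
      liftSP S gd (Xa.1 io.1) (Yb.1 io.1) io.2

/-! ### Live transcripts -/

/-- `𝒜_{π,W}` : the vectors `a ∈ f⁻¹(1)` such that `(W,a)` is consistent with `π`. -/
def Aset {m ℓ : ℕ} {Λ O : Type} (f : (Fin m → Bool) → Bool)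
    (Pr : Protocol ((Fin m → Fin ℓ → Λ) × {a : Fin m → Bool // f a = true})
                   ((Fin m → Fin ℓ → Λ) × {b : Fin m → Bool // f b = false}) (Fin m × O))
    (π : List Bool) (W : Fin m → Fin ℓ → Λ) : Set (Fin m → Bool) :=
  {a | ∃ h : f a = true, Protocol.followsA Pr π (W, ⟨a, h⟩)}

/-- `ℬ_{π,W}` : the vectors `b ∈ f⁻¹(0)` such that `(W,b)` is consistent with `π`. -/
def Bset {m ℓ : ℕ} {Λ O : Type} (f : (Fin m → Bool) → Bool)
    (Pr : Protocol ((Fin m → Fin ℓ → Λ) × {a : Fin m → Bool // f a = true})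
                   ((Fin m → Fin ℓ → Λ) × {b : Fin m → Bool // f b = false}) (Fin m × O))
    (π : List Bool) (W : Fin m → Fin ℓ → Λ) : Set (Fin m → Bool) :=
  {b | ∃ h : f b = false, Protocol.followsB Pr π (W, ⟨b, h⟩)}

/-- `γ(π)` : the average over uniform `W ∈ Λ^{m×ℓ}` of `mL(𝒜_{π,W} × ℬ_{π,W})`. -/
def gammaM {m ℓ : ℕ} {Λ O : Type} [Fintype Λ] [DecidableEq Λ] (f : (Fin m → Bool) → Bool)
    (Pr : Protocol ((Fin m → Fin ℓ → Λ) × {a : Fin m → Bool // f a = true})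
                   ((Fin m → Fin ℓ → Λ) × {b : Fin m → Bool // f b = false}) (Fin m × O))
    (π : List Bool) : ℝ :=
  (∑ W : Fin m → Fin ℓ → Λ, (mL (Aset f Pr π W) (Bset f Pr π W) : ℝ)) /
    (Fintype.card (Fin m → Fin ℓ → Λ) : ℝ)

/-- A transcript is live (alive) if it is a vertex of the protocol tree and `γ(π) ≥ 4m²`. -/
def LiveT {m ℓ : ℕ} {Λ O : Type} [Fintype Λ] [DecidableEq Λ] (f : (Fin m → Bool) → Bool)
    (Pr : Protocol ((Fin m → Fin ℓ → Λ) × {a : Fin m → Bool // f a = true})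
                   ((Fin m → Fin ℓ → Λ) × {b : Fin m → Bool // f b = false}) (Fin m × O))
    (π : List Bool) : Prop :=
  Protocol.IsTranscript Pr π ∧ 4 * (m : ℝ) ^ 2 ≤ gammaM f Pr π

/-! ### Average degree -/

/-- Projection of a set of strings to the coordinates in `J`. -/
def projSet {N Λ : Type} (W : Set (N → Λ)) (J : Set N) : Set (↥J → Λ) :=
  (fun w (j : ↥J) => w j.val) '' W

/-- Relative average degree: `rAvgDeg_I(W) = (|W| / |W|_{N−I}|) / |Λ|^{|I|}`. -/
def rAvgDeg {N Λ : Type} [Fintype Λ] (W : Set (N → Λ)) (I : Set N) : ℝ :=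
  ((W.ncard : ℝ) / ((projSet W Iᶜ).ncard : ℝ)) / ((Fintype.card Λ : ℝ) ^ I.ncard)

/-- View a set of `m × ℓ` matrices as a set of strings indexed by `Fin m × Fin ℓ`. -/
def matSet {m ℓ : ℕ} {Λ : Type} (WW : Set (Fin m → Fin ℓ → Λ)) : Set (Fin m × Fin ℓ → Λ) :=
  (fun W p => W p.1 p.2) '' WW

/-! ### Hard collections -/

/-- A transcript `π` supports the collection `(𝒲, a^W, b^W)` if for every `W ∈ 𝒲`,
`(W, a^W) ∈ 𝒳_π` and `(W, b^W) ∈ 𝒴_π`. -/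
def SupportsCollection {m ℓ : ℕ} {Λ O : Type} (f : (Fin m → Bool) → Bool)
    (Pr : Protocol ((Fin m → Fin ℓ → Λ) × {a : Fin m → Bool // f a = true})
                   ((Fin m → Fin ℓ → Λ) × {b : Fin m → Bool // f b = false}) (Fin m × O))
    (π : List Bool) (WW : Set (Fin m → Fin ℓ → Λ))
    (aW bW : (Fin m → Fin ℓ → Λ) → (Fin m → Bool)) : Prop :=
  ∀ W ∈ WW, aW W ∈ Aset f Pr π W ∧ bW W ∈ Bset f Pr π W

/-- The collection `(𝒲, a^W, b^W)` is hard: there is a set `R` of revealed rows such that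
(i) every set `I` of unrevealed rows has relative average degree at least `4^{-|I|}` in the
restriction of `𝒲` to the unrevealed rows, and (ii) `a^W|_R ≤ b^{W'}|_R` for all `W, W' ∈ 𝒲`. -/
def HardCollection {m ℓ : ℕ} {Λ : Type} [Fintype Λ] (f : (Fin m → Bool) → Bool)
    (WW : Set (Fin m → Fin ℓ → Λ))
    (aW bW : (Fin m → Fin ℓ → Λ) → (Fin m → Bool)) : Prop :=
  ∃ R : Set (Fin m),
    (∀ I : Set (Fin m), I ⊆ Rᶜ →
      ((1 : ℝ) / 4) ^ I.ncard ≤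
        rAvgDeg (projSet (matSet WW) {p : Fin m × Fin ℓ | p.1 ∉ R})
          {q : ↥{p : Fin m × Fin ℓ | p.1 ∉ R} | q.val.1 ∈ I}) ∧
    (∀ W ∈ WW, ∀ W' ∈ WW, ∀ i ∈ R, aW W i ≤ bW W' i)

/-! ### CNF formulas, Nullstellensatz degree -/

/-- A clause over `ℓ` variables: a set of literals; `(i, true)` is the positive
literal `x_i`, `(i, false)` is the negative literal `¬x_i`. -/
abbrev CnfClause (ℓ : ℕ) := Finset (Fin ℓ × Bool)

/-- An assignment satisfies a clause if some literal is satisfied. -/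
def clauseSat {ℓ : ℕ} (z : Fin ℓ → Bool) (C : CnfClause ℓ) : Prop :=
  ∃ lit ∈ C, z lit.1 = lit.2

/-- The search problem `S_φ` : given an assignment, find a violated clause of `φ`. -/
def searchCNF {ℓ : ℕ} (φ : Finset (CnfClause ℓ)) :
    (Fin ℓ → Bool) → CnfClause ℓ → Prop :=
  fun z C => C ∈ φ ∧ ¬ clauseSat z C

/-- The standard polynomial encoding of a clause. -/
def clausePoly {ℓ : ℕ} (C : CnfClause ℓ) : MvPolynomial (Fin ℓ) (ZMod 2) :=
  ∏ lit ∈ C, (if lit.2 then 1 - MvPolynomial.X lit.1 else MvPolynomial.X lit.1)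

/-- The Nullstellensatz degree of a CNF contradiction `φ` over `F₂`. -/
def NSdeg {ℓ : ℕ} (φ : Finset (CnfClause ℓ)) : ℕ :=
  sInf {d : ℕ | ∃ (q : CnfClause ℓ → MvPolynomial (Fin ℓ) (ZMod 2))
      (r : Fin ℓ → MvPolynomial (Fin ℓ) (ZMod 2)),
      ((∑ C ∈ φ, clausePoly C * q C) +
        ∑ i : Fin ℓ, (MvPolynomial.X i ^ 2 - MvPolynomial.X i) * r i) = 1 ∧
      (∀ C ∈ φ, (clausePoly C * q C).totalDegree ≤ d) ∧
      (∀ i : Fin ℓ, ((MvPolynomial.X i ^ 2 - MvPolynomial.X i) * r i).totalDegree ≤ d)}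

/-- The equality gadget. -/
def eqGadget {Λ : Type} [DecidableEq Λ] : Λ → Λ → Bool := fun u v => decide (u = v)

/-! ### Semi-monotone composition -/

/-- `U_m ◇ mKW_g` : Alice gets `X`, Bob gets `Y`; with `a_i = g(X_i)`, `b_i = g(Y_i)`,
valid outputs are entries `(i,j)` with (`a_i > b_i` and `X i j > Y i j`), or
(`a_i < b_i` and `X i j < Y i j`), or (`a_i = b_i` and `X i j ≠ Y i j`); if `a = b`
the players may output the failure symbol `⊥` (here `none`). -/
def semiU {m : ℕ} {ι : Type} (g : (ι → Bool) → Bool) :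
    (Fin m → ι → Bool) → (Fin m → ι → Bool) → Option (Fin m × ι) → Prop :=
  fun X Y o =>
    match o with
    | none => ∀ i, g (X i) = g (Y i)
    | some e =>
        (g (X e.1) = true ∧ g (Y e.1) = false ∧ X e.1 e.2 = true ∧ Y e.1 e.2 = false) ∨
        (g (X e.1) = false ∧ g (Y e.1) = true ∧ X e.1 e.2 = false ∧ Y e.1 e.2 = true) ∨
        (g (X e.1) = g (Y e.1) ∧ X e.1 e.2 ≠ Y e.1 e.2)

/-! ### Razborov rank measure over F₂ -/

/-- The maximal `F₂`-rank of the restriction of `A` to an `S`-monochromatic rectangle. -/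
def monoMaxRank {X Y O : Type} [Fintype X] [Fintype Y]
    (S : X → Y → O → Prop) (A : Matrix X Y (ZMod 2)) : ℕ :=
  sSup {r : ℕ | ∃ (U : Finset X) (V : Finset Y) (o : O),
    (∀ x ∈ U, ∀ y ∈ V, S x y o) ∧
    r = (A.submatrix (Subtype.val : {x // x ∈ U} → X)
          (Subtype.val : {y // y ∈ V} → Y)).rank}

/-- The Razborov rank measure `μ_{F₂}(S, A)`. -/
def muF2 {X Y O : Type} [Fintype X] [Fintype Y]
    (S : X → Y → O → Prop) (A : Matrix X Y (ZMod 2)) : ℝ :=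
  (A.rank : ℝ) / (monoMaxRank S A : ℝ)

/-! ### Kronecker powers, pattern matrices -/

/-- The `m`-fold Kronecker power of a square matrix `B`, with index type `Fin m → ι`. -/
def kronPow {ι R : Type} [CommMonoid R] (m : ℕ) (B : Matrix ι ι R) :
    Matrix (Fin m → ι) (Fin m → ι) R :=
  Matrix.of fun x y => ∏ i, B (x i) (y i)

/-- The pattern matrix `A_{x,y} = p(eq(x₁,y₁),…,eq(x_ℓ,y_ℓ))` of a multilinear
polynomial `p` with coefficients `phat` over `F₂`. -/
def patternMatrix {Λ : Type} [DecidableEq Λ] (ℓ : ℕ)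
    (phat : Finset (Fin ℓ) → ZMod 2) : Matrix (Fin ℓ → Λ) (Fin ℓ → Λ) (ZMod 2) :=
  Matrix.of fun x y =>
    ∑ T : Finset (Fin ℓ), phat T * ∏ i ∈ T, (if x i = y i then (1 : ZMod 2) else 0)

/-! ### s-t-connectivity -/

/-- The `s`-`t`-connectivity function: the input is the adjacency matrix of a directed
graph on `n` vertices, `s = 0`, `t = n-1`; output is whether `t` is reachable from `s`. -/
def stConn (n : ℕ) : ((Fin n × Fin n) → Bool) → Bool :=
  fun E =>
    if ∀ h : 0 < n,
        Relation.ReflTransGen (fun u v : Fin n => E (u, v) = true)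
          ⟨0, h⟩ ⟨n - 1, Nat.sub_lt h Nat.one_pos⟩
      then true else false

/-! ### The matrix M of the semi-monotone composition theorem -/

/-- The matrix `M` used in the semi-monotone composition theorem, built from a matrix
`A ∈ F₂^{𝒳×𝒴}` (with `𝒳 = range xs`, `𝒴 = range ys` identified with `Fin K` via the
left inverses `ix`, `iy`). -/
def semiM {m n K : ℕ} (g : (Fin n → Bool) → Bool) (xs ys : Fin K → (Fin n → Bool))
    (ix iy : (Fin n → Bool) → Fin K) (A : Matrix (Fin K) (Fin K) (ZMod 2)) :
    Matrix (Fin m → Fin n → Bool) (Fin m → Fin n → Bool) (ZMod 2) :=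
  Matrix.of fun X Y =>
    if (fun i => g (X i)) = (fun i => g (Y i)) then 0
    else ∏ i : Fin m,
      (if g (X i) = true ∧ g (Y i) = false then A (ix (X i)) (iy (Y i))
       else if g (X i) = false ∧ g (Y i) = true then A (ix (Y i)) (iy (X i))
       else if X i = Y i then 1 else 0)

end

open Classical

noncomputable section

/-! ### Sign function, discrepancy and spectral bound -/

def sg (b : Bool) : ℝ := if b then -1 else 1

lemma sg_abs (b : Bool) : |sg b| = 1 := by cases b <;> simp [sg]

lemma sg_sq (b : Bool) : sg b * sg b = 1 := by cases b <;> simp [sg]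

lemma disc_bound {t : ℕ} (gd : (Fin t → Bool) → (Fin t → Bool) → Bool)
    (A B : Finset (Fin t → Bool)) :
    |∑ u ∈ A, ∑ v ∈ B, sg (gd u v)| ≤ disc gd * ((2 ^ t : ℝ) * (2 ^ t : ℝ)) := by
  have key : ∀ A B : Finset (Fin t → Bool),
      ∑ u ∈ A, ∑ v ∈ B, sg (gd u v) =
      ((((A ×ˢ B).filter fun uv => gd uv.1 uv.2 = false).card : ℝ) -
          (((A ×ˢ B).filter fun uv => gd uv.1 uv.2 = true).card : ℝ)) := by
    intro A B
    rw [← Finset.sum_product', Finset.card_filter, Finset.card_filter]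
    push_cast
    rw [← Finset.sum_sub_distrib]
    refine Finset.sum_congr rfl fun x _ => ?_
    cases gd x.1 x.2 <;> simp [sg]
  have hpos : (0 : ℝ) < (2 ^ t : ℝ) * (2 ^ t : ℝ) := by positivity
  rw [← div_le_iff₀ hpos]
  apply le_csSup
  · refine ⟨1, ?_⟩
    rintro r ⟨A, B, rfl⟩
    rw [div_le_one hpos, ← key]
    calc |∑ u ∈ A, ∑ v ∈ B, sg (gd u v)| ≤ ∑ u ∈ A, ∑ v ∈ B, |sg (gd u v)| :=
          (Finset.abs_sum_le_sum_abs _ _).trans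
            (Finset.sum_le_sum fun _ _ => Finset.abs_sum_le_sum_abs _ _)
      _ = (A.card : ℝ) * B.card := by simp [sg_abs]
      _ ≤ _ := by
        have h : ∀ C : Finset (Fin t → Bool), (C.card : ℝ) ≤ 2 ^ t := by
          intro C
          have := Finset.card_le_univ C
          simp at this
          exact_mod_cast this
        exact mul_le_mul (h A) (h B) (by positivity) (by positivity)
  · exact ⟨A, B, by rw [key]⟩

section Spectral
variable {Λ : Type} [Fintype Λ]

lemma cut_to_inf (M : Λ → Λ → ℝ) (E : ℝ)
    (h : ∀ A B : Finset Λ, |∑ u ∈ A, ∑ v ∈ B, M u v| ≤ E)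
    (a b : Λ → ℝ) (α β : ℝ) (ha : ∀ u, |a u| ≤ α) (hb : ∀ v, |b v| ≤ β)
    (hα : 0 ≤ α) (hβ : 0 ≤ β) :
    |∑ u, ∑ v, M u v * a u * b v| ≤ 4 * E * α * β := by
  -- sum of absolute values is a difference of two restricted sums
  have hsplit : ∀ g : Λ → ℝ, ∃ P : Finset Λ,
      ∑ u, |g u| = ∑ u ∈ P, g u - ∑ u ∈ Pᶜ, g u := by
    intro g
    refine ⟨Finset.univ.filter (fun u => 0 ≤ g u), ?_⟩
    rw [← Finset.sum_add_sum_compl (Finset.univ.filter (fun u => 0 ≤ g u)), sub_eq_add_neg,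
      ← Finset.sum_neg_distrib]
    congr 1
    · refine Finset.sum_congr rfl fun u hu => abs_of_nonneg (by simpa using hu)
    · refine Finset.sum_congr rfl fun u hu => abs_of_neg (by simpa using hu)
  have hgen : ∀ (g w : Λ → ℝ) (γ : ℝ), (∀ u, |w u| ≤ γ) →
      |∑ u, g u * w u| ≤ γ * ∑ u, |g u| := by
    intro g w γ hw
    refine (Finset.abs_sum_le_sum_abs _ _).trans ?_
    rw [Finset.mul_sum]
    refine Finset.sum_le_sum fun u _ => ?_
    rw [abs_mul, mul_comm]
    exact mul_le_mul_of_nonneg_right (hw u) (abs_nonneg _)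
  have h1 : ∀ P : Finset Λ, |∑ u ∈ P, ∑ v, M u v * b v| ≤ β * (2 * E) := by
    intro P
    rw [Finset.sum_comm]
    have : ∑ v, ∑ u ∈ P, M u v * b v = ∑ v, (∑ u ∈ P, M u v) * b v := by
      refine Finset.sum_congr rfl fun v _ => ?_
      rw [Finset.sum_mul]
    rw [this]
    refine (hgen _ b β hb).trans (mul_le_mul_of_nonneg_left ?_ hβ)
    obtain ⟨Q, hQ⟩ := hsplit (fun v => ∑ u ∈ P, M u v)
    rw [hQ, Finset.sum_comm, Finset.sum_comm (s := Qᶜ)]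
    have := abs_le.1 (h P Q)
    have := abs_le.1 (h P Qᶜ)
    linarith
  have e : ∑ u, ∑ v, M u v * a u * b v = ∑ u, (∑ v, M u v * b v) * a u := by
    refine Finset.sum_congr rfl fun u _ => ?_
    rw [Finset.sum_mul]
    refine Finset.sum_congr rfl fun v _ => by ring
  rw [e]
  refine (hgen _ a α ha).trans ?_
  obtain ⟨P, hP⟩ := hsplit (fun u => ∑ v, M u v * b v)
  rw [hP]
  have h2 := abs_le.1 (h1 P)
  have h3 := abs_le.1 (h1 Pᶜ)
  calc α * _ ≤ α * (4 * E * β) := mul_le_mul_of_nonneg_left (by linarith) hα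
    _ = _ := by ring

lemma l2_bound (M : Λ → Λ → ℝ) (E c : ℝ)
    (h : ∀ A B : Finset Λ, |∑ u ∈ A, ∑ v ∈ B, M u v| ≤ E)
    (hM : ∀ u v, |M u v| ≤ 1) (hc : 0 ≤ c)
    (hcE : 16 * E ^ 2 * (Fintype.card Λ : ℝ) ^ 2 ≤ c ^ 3) (q : Λ → ℝ) :
    ∑ u, (∑ v, M u v * q v) ^ 2 ≤ c * ∑ v, q v ^ 2 := by
  set MM : Matrix Λ Λ ℝ := Matrix.of M with hMM
  have hMM' : ∀ b : Λ → ℝ, ∀ u, (MM.mulVec b) u = ∑ v, M u v * b v := fun b u => rfl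
  set H : Matrix Λ Λ ℝ := c • (1 : Matrix Λ Λ ℝ) - MM.transpose * MM with hH
  have hHerm : H.IsHermitian := by
    unfold Matrix.IsHermitian
    simp [hH, Matrix.conjTranspose_eq_transpose_of_trivial]
  have hHv : ∀ b : Λ → ℝ, H.mulVec b = c • b - MM.transpose.mulVec (MM.mulVec b) := by
    intro b
    simp [hH, Matrix.sub_mulVec, Matrix.smul_mulVec, Matrix.mulVec_mulVec]
  have hadj : ∀ b a : Λ → ℝ, b ⬝ᵥ MM.transpose.mulVec a = MM.mulVec b ⬝ᵥ a := by
    intro b a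
    rw [Matrix.mulVec_transpose, dotProduct_comm, ← Matrix.dotProduct_mulVec,
      dotProduct_comm]
  have hCS : ∀ (g b : Λ → ℝ), (∀ v, |g v| ≤ 1) →
      (∑ v, g v * b v) ^ 2 ≤ (Fintype.card Λ : ℝ) * ∑ v, b v ^ 2 := by
    intro g b hg
    refine (Finset.sum_mul_sq_le_sq_mul_sq _ _ _).trans ?_
    refine mul_le_mul_of_nonneg_right ?_ (Finset.sum_nonneg fun _ _ => sq_nonneg _)
    calc ∑ v, g v ^ 2 ≤ ∑ v : Λ, (1 : ℝ) := Finset.sum_le_sum fun v _ => by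
          rw [← sq_abs]; exact pow_le_one₀ (abs_nonneg _) (hg v)
      _ = _ := by simp
  have hpsd : H.PosSemidef := by
    rw [hHerm.posSemidef_iff_eigenvalues_nonneg]
    intro j
    by_contra hneg
    simp only [Pi.zero_apply, not_le] at hneg
    set μ := hHerm.eigenvalues j with hμ
    set b : Λ → ℝ := (hHerm.eigenvectorBasis j).ofLp with hb
    have hev : H.mulVec b = μ • b := hHerm.mulVec_eigenvectorBasis j
    have hb0 : b ≠ 0 := by
      intro h0
      have : hHerm.eigenvectorBasis j ≠ 0 := by
        have := hHerm.eigenvectorBasis.toBasis.ne_zero j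
        simpa using this
      exact this (by ext i; exact congrFun h0 i)
    set lam := c - μ with hlam
    have hlc : c < lam := by linarith
    have hl0 : 0 < lam := by linarith
    have hT : MM.transpose.mulVec (MM.mulVec b) = lam • b := by
      have := hHv b
      rw [hev] at this
      rw [hlam, sub_smul, this]; abel
    set B2 := ∑ v, b v ^ 2 with hB2
    have hB2pos : 0 < B2 := by
      obtain ⟨v, hv⟩ := Function.ne_iff.1 hb0
      exact Finset.sum_pos' (fun _ _ => sq_nonneg _)
        ⟨v, Finset.mem_univ _, by simpa using pow_pos (abs_pos.2 hv) 2⟩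
    have hbb : b ⬝ᵥ b = B2 := by
      simp [dotProduct, hB2, sq]
    set a := MM.mulVec b with ha
    have haa : ∑ u, a u ^ 2 = lam * B2 := by
      have := hadj b a
      rw [hT, dotProduct_smul, hbb] at this
      simp [dotProduct] at this
      rw [this]
      simp only [sq]
      rfl
    have ha1 : ∀ u, a u ^ 2 ≤ (Fintype.card Λ : ℝ) * B2 := fun u => hCS _ b (hM u)
    have hb1 : ∀ v, b v ^ 2 ≤ (Fintype.card Λ : ℝ) * B2 / lam := by
      intro v
      have h1 : lam * b v = ∑ u, M u v * a u := by
        have := congrFun hT v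
        simp [Matrix.mulVec, dotProduct] at this
        rw [← this]
        rfl
      have h2 := hCS (fun u => M u v) a (fun u => hM u v)
      rw [← h1, haa] at h2
      rw [le_div_iff₀ hl0]
      have : lam * (b v ^ 2 * lam) ≤ lam * ((Fintype.card Λ : ℝ) * B2) := by nlinarith
      exact le_of_mul_le_mul_left this hl0
    have hE := cut_to_inf M E h a b (Real.sqrt ((Fintype.card Λ : ℝ) * B2))
      (Real.sqrt ((Fintype.card Λ : ℝ) * B2 / lam)) (fun u => Real.abs_le_sqrt (ha1 u))
      (fun v => Real.abs_le_sqrt (hb1 v)) (Real.sqrt_nonneg _) (Real.sqrt_nonneg _)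
    have e1 : ∑ u, ∑ v, M u v * a u * b v = lam * B2 := by
      rw [← haa]
      refine Finset.sum_congr rfl fun u _ => ?_
      have hau : a u = ∑ v, M u v * b v := hMM' b u
      calc ∑ v, M u v * a u * b v = (∑ v, M u v * b v) * a u := by
            rw [Finset.sum_mul]
            exact Finset.sum_congr rfl fun v _ => by ring
        _ = a u ^ 2 := by rw [← hau, sq]
    rw [e1] at hE
    have hE2 := pow_le_pow_left₀ (abs_nonneg _) hE 2
    rw [sq_abs, mul_pow (4 * E * _), mul_pow (4 * E), Real.sq_sqrt (by positivity), Real.sq_sqrt (by positivity)] at hE2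
    have h3 : (lam * B2) ^ 2 * lam ≤ (4 * E) ^ 2 * ((Fintype.card Λ : ℝ) * B2) *
        ((Fintype.card Λ : ℝ) * B2 / lam) * lam := mul_le_mul_of_nonneg_right hE2 hl0.le
    have h4 : (4 * E) ^ 2 * ((Fintype.card Λ : ℝ) * B2) *
        ((Fintype.card Λ : ℝ) * B2 / lam) * lam = (16 * E ^ 2 * (Fintype.card Λ : ℝ) ^ 2) * B2 ^ 2 := by
      field_simp; ring
    have h5 : lam ^ 3 * B2 ^ 2 ≤ c ^ 3 * B2 ^ 2 := by
      calc lam ^ 3 * B2 ^ 2 = (lam * B2) ^ 2 * lam := by ring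
        _ ≤ _ := h3
        _ = _ := h4
        _ ≤ _ := mul_le_mul_of_nonneg_right hcE (by positivity)
    have h6 := le_of_mul_le_mul_right h5 (by positivity)
    exact absurd (pow_lt_pow_left₀ hlc hc (by norm_num : (3 : ℕ) ≠ 0)) (not_lt.2 h6)
  have := hpsd.dotProduct_mulVec_nonneg q
  rw [hHv] at this
  simp only [star_trivial, dotProduct_sub, dotProduct_smul, hadj] at this
  simp only [dotProduct, smul_eq_mul, hMM'] at this
  simp only [sq]
  linarith

/-- Tensor power of the `ℓ₂` bound. -/
lemma tensor_bound (M : Λ → Λ → ℝ) (c : ℝ) (hc : 0 ≤ c)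
    (hM : ∀ q : Λ → ℝ, ∑ u, (∑ v, M u v * q v) ^ 2 ≤ c * ∑ v, q v ^ 2) :
    ∀ (k : ℕ) (q : (Fin k → Λ) → ℝ),
      ∑ u : Fin k → Λ, (∑ v : Fin k → Λ, (∏ j, M (u j) (v j)) * q v) ^ 2 ≤
        c ^ k * ∑ v, q v ^ 2 := by
  intro k
  induction k with
  | zero => intro q; simp
  | succ k ih =>
    intro q
    have split : ∀ g : (Fin (k + 1) → Λ) → ℝ,
        ∑ u, g u = ∑ u0 : Λ, ∑ u' : Fin k → Λ, g (Fin.cons u0 u') := by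
      intro g
      rw [← Fintype.sum_prod_type']
      exact (Fintype.sum_equiv (Fin.consEquiv (fun _ => Λ)) _ _ (fun _ => rfl)).symm
    rw [split, split]
    simp only [split (fun v => _ * q v), Fin.prod_univ_succ, Fin.cons_zero, Fin.cons_succ]
    rw [Finset.sum_comm]
    -- inner application on the first coordinate
    have step1 : ∀ u' : Fin k → Λ,
        ∑ u0, (∑ v0, ∑ v' : Fin k → Λ, M u0 v0 * (∏ j, M (u' j) (v' j)) * q (Fin.cons v0 v')) ^ 2 ≤
        c * ∑ v0, (∑ v' : Fin k → Λ, (∏ j, M (u' j) (v' j)) * q (Fin.cons v0 v')) ^ 2 := by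
      intro u'
      have := hM (fun v0 => ∑ v' : Fin k → Λ, (∏ j, M (u' j) (v' j)) * q (Fin.cons v0 v'))
      simp only [Finset.mul_sum, ← mul_assoc] at this ⊢
      exact this
    refine (Finset.sum_le_sum fun u' _ => step1 u').trans ?_
    rw [← Finset.mul_sum, Finset.sum_comm, pow_succ, mul_comm (c ^ k), mul_assoc]
    refine mul_le_mul_of_nonneg_left ?_ hc
    rw [Finset.mul_sum]
    exact Finset.sum_le_sum fun v0 _ => ih (fun v' => q (Fin.cons v0 v'))

end Spectral
end


open Classical

set_option linter.unusedSectionVars false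

noncomputable section

/-! ### Density and the pruning lemma -/

section Prune
variable {N Λ : Type} [Fintype N] [DecidableEq N] [Fintype Λ]

def fib (B : Finset (N → Λ)) (J : Finset N) (y : N → Λ) : Finset (N → Λ) :=
  B.filter (fun b => ∀ j ∈ J, b j = y j)

def chi (gd : Λ → Λ → Bool) (K : Finset N) (x y : N → Λ) : ℝ :=
  ∏ j ∈ K, sg (gd (x j) (y j))

def DenseOn (D : ℝ) (F : Finset N) (B : Finset (N → Λ)) : Prop :=
  ∀ J ⊆ F, ∀ y, ((fib B J y).card : ℝ) ≤ D ^ J.card * B.card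

/-- The `ℓ₂` operator bound of the sign matrix of the gadget. -/
def L2B (gd : Λ → Λ → Bool) (c : ℝ) : Prop :=
  ∀ q : Λ → ℝ, ∑ u, (∑ v, sg (gd u v) * q v) ^ 2 ≤ c * ∑ v, q v ^ 2

lemma chi_abs (gd : Λ → Λ → Bool) (K : Finset N) (x y : N → Λ) : |chi gd K x y| = 1 := by
  simp [chi, Finset.abs_prod, sg_abs]

lemma fib_empty (B : Finset (N → Λ)) (y : N → Λ) : fib B ∅ y = B := by simp [fib]

lemma second_moment (gd : Λ → Λ → Bool) (c : ℝ) (hc : 0 ≤ c) (hM : L2B gd c)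
    (A B : Finset (N → Λ)) (F : Finset N) (D D' : ℝ) (hD : 0 ≤ D) (hD' : 0 ≤ D')
    (hA : DenseOn D' F A) (hB : DenseOn D F B) (J K : Finset N) (hJ : J ⊆ F) (hK : K ⊆ F)
    (hJK : Disjoint J K) (y : N → Λ) :
    ∑ x ∈ A, (∑ b ∈ fib B J y, chi gd K x b) ^ 2 ≤
      (D' ^ K.card * A.card) * (c ^ K.card *
        ((D ^ (J.card + K.card) * B.card) * (D ^ J.card * B.card))) := by
  set k := K.card with hk
  let e : Fin k ≃ K := K.equivFin.symm
  let r : (N → Λ) → (Fin k → Λ) := fun x i => x (e i)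
  set B' := fib B J y with hB'
  have hchi : ∀ x b, chi gd K x b = ∏ i, sg (gd (r x i) (r b i)) := by
    intro x b
    unfold chi
    rw [← Finset.prod_coe_sort]
    exact (Equiv.prod_comp e (fun j : K => sg (gd (x j) (b j)))).symm
  have hr : ∀ x x' : N → Λ, r x = r x' ↔ ∀ j ∈ K, x j = x' j := by
    intro x x'
    constructor
    · intro h j hj
      have := congrFun h (e.symm ⟨j, hj⟩)
      simpa [r] using this
    · intro h
      funext i
      exact h _ (e i).2
  let q : (Fin k → Λ) → ℝ := fun v => ((B'.filter (fun b => r b = v)).card : ℝ)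
  let G : (Fin k → Λ) → ℝ := fun u => ∑ v, (∏ j, sg (gd (u j) (v j))) * q v
  have hG : ∀ x, ∑ b ∈ B', chi gd K x b = G (r x) := by
    intro x
    rw [← Finset.sum_fiberwise B' r]
    refine Finset.sum_congr rfl fun v _ => ?_
    rw [Finset.sum_congr rfl (g := fun _ => ∏ j, sg (gd (r x j) (v j)))]
    · simp [q, mul_comm]
    · intro b hb
      rw [hchi, (Finset.mem_filter.1 hb).2]
  have hAu : ∀ u, ((A.filter (fun x => r x = u)).card : ℝ) ≤ D' ^ k * A.card := by
    intro u
    rcases (A.filter (fun x => r x = u)).eq_empty_or_nonempty with h0 | ⟨x0, hx0⟩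
    · rw [h0]; simp; positivity
    · have h1 := (Finset.mem_filter.1 hx0).2
      have : A.filter (fun x => r x = u) = fib A K x0 := by
        unfold fib
        refine Finset.filter_congr fun x _ => ?_
        rw [← h1, hr]
      rw [this]
      exact hA K hK x0
  have hqv : ∀ v, q v ≤ D ^ (J.card + k) * B.card := by
    intro v
    show ((B'.filter (fun b => r b = v)).card : ℝ) ≤ _
    rcases (B'.filter (fun b => r b = v)).eq_empty_or_nonempty with h0 | ⟨b0, hb0⟩
    · rw [h0]; simp; positivity
    · obtain ⟨hb1, hb2⟩ := Finset.mem_filter.1 hb0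
      have hsub : B'.filter (fun b => r b = v) ⊆ fib B (J ∪ K) b0 := by
        intro b hb
        obtain ⟨h1, h2⟩ := Finset.mem_filter.1 hb
        simp only [hB', fib, Finset.mem_filter] at h1 hb1 ⊢
        refine ⟨h1.1, fun j hj => ?_⟩
        rcases Finset.mem_union.1 hj with hj | hj
        · rw [h1.2 j hj, hb1.2 j hj]
        · exact (hr b b0).1 (h2.trans hb2.symm) j hj
      have h3 := hB (J ∪ K) (Finset.union_subset hJ hK) b0
      rw [Finset.card_union_of_disjoint hJK] at h3
      exact le_trans (by exact_mod_cast Finset.card_le_card hsub) h3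
  have hqsum : ∑ v, q v = B'.card := by
    have := Finset.card_eq_sum_card_fiberwise (s := B') (t := Finset.univ) (f := r)
      (fun _ _ => by simp)
    rw [this]; push_cast; rfl
  have hq2 : ∑ v, q v ^ 2 ≤ (D ^ (J.card + k) * B.card) * (D ^ J.card * B.card) := by
    calc ∑ v, q v ^ 2 ≤ ∑ v, (D ^ (J.card + k) * B.card) * q v :=
          Finset.sum_le_sum fun v _ => by
            rw [sq]; exact mul_le_mul_of_nonneg_right (hqv v) (by positivity)
      _ = (D ^ (J.card + k) * B.card) * B'.card := by rw [← Finset.mul_sum, hqsum]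
      _ ≤ _ := mul_le_mul_of_nonneg_left (hB J hJ y) (by positivity)
  calc ∑ x ∈ A, (∑ b ∈ B', chi gd K x b) ^ 2 = ∑ x ∈ A, G (r x) ^ 2 :=
        Finset.sum_congr rfl fun x _ => by rw [hG]
    _ = ∑ u, ((A.filter (fun x => r x = u)).card : ℝ) * G u ^ 2 := by
        rw [← Finset.sum_fiberwise A r]
        refine Finset.sum_congr rfl fun u _ => ?_
        rw [Finset.sum_congr rfl (g := fun _ => G u ^ 2)]
        · simp
        · intro b hb
          rw [(Finset.mem_filter.1 hb).2]
    _ ≤ ∑ u, (D' ^ k * A.card) * G u ^ 2 :=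
        Finset.sum_le_sum fun u _ => mul_le_mul_of_nonneg_right (hAu u) (sq_nonneg _)
    _ = (D' ^ k * A.card) * ∑ u, G u ^ 2 := by rw [Finset.mul_sum]
    _ ≤ _ := by
        refine mul_le_mul_of_nonneg_left ?_ (by positivity)
        refine (tensor_bound (fun u v => sg (gd u v)) c hc hM k q).trans ?_
        exact mul_le_mul_of_nonneg_left hq2 (by positivity)

/-- Sum over subsets of `(1/(4n))^|K|`. -/
lemma sum_powerset_le (n : ℕ) (hn : 1 ≤ n) (I : Finset N) (hI : I.card ≤ n) :
    ∑ K ∈ I.powerset, ((1 : ℝ) / (4 * n)) ^ K.card ≤ 3 / 2 := by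
  have h := Finset.prod_add (fun _ : N => (1 : ℝ) / (4 * n)) (fun _ => 1) I
  simp only [Finset.prod_const, one_pow, mul_one] at h
  rw [← h]
  have hn' : (0 : ℝ) < n := by exact_mod_cast hn
  calc ((1 : ℝ) / (4 * n) + 1) ^ I.card ≤ (1 / (4 * n) + 1) ^ n :=
        pow_le_pow_right₀ (by linarith [show (0 : ℝ) ≤ 1 / (4 * n) by positivity]) hI
    _ ≤ (Real.exp (1 / (4 * n))) ^ n :=
        pow_le_pow_left₀ (by positivity) (Real.add_one_le_exp _) n
    _ = Real.exp (1 / 4) := by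
        rw [← Real.exp_nat_mul]; congr 1; field_simp
    _ ≤ 3 / 2 := by
        have h1 := Real.one_sub_le_exp_neg (1 / 4)
        rw [Real.exp_neg] at h1
        have h2 : 0 < Real.exp (1 / 4) := Real.exp_pos _
        have h3 : (1 - 1 / 4) * Real.exp (1 / 4) ≤ 1 := by
          calc _ ≤ (Real.exp (1 / 4))⁻¹ * Real.exp (1 / 4) :=
                mul_le_mul_of_nonneg_right h1 h2.le
            _ = 1 := inv_mul_cancel₀ h2.ne'
        linarith

/-- `x` is good for `B`: all the character sums are small. -/
def Good (gd : Λ → Λ → Bool) (n k₀ : ℕ) (D : ℝ) (F : Finset N) (B : Finset (N → Λ))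
    (x : N → Λ) : Prop :=
  ∀ J ⊆ F, ∀ K ⊆ F, Disjoint J K → ∀ y : N → Λ,
    |∑ b ∈ fib B J y, chi gd K x b| ≤
      (4 * n : ℝ) ^ (k₀ * J.card) * (1 / (4 * n)) ^ K.card * (D ^ J.card * B.card)

set_option maxHeartbeats 800000 in
lemma bad_le_half (gd : Λ → Λ → Bool) (c : ℝ) (hc : 0 ≤ c) (hM : L2B gd c)
    (A B : Finset (N → Λ)) (F : Finset N) (n k₀ : ℕ) (D w τ : ℝ) (hD : 0 < D) (hw : 0 ≤ w)
    (hn : 1 ≤ n) (hnN : Fintype.card N ≤ n) (hk₀ : 1 ≤ k₀) (hτ : 1 ≤ τ)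
    (hτL : (Fintype.card Λ : ℝ) ≤ τ ^ k₀)
    (hnum : (4 * n) * τ * w * c * D ^ 2 * (4 * n) ^ 2 * (16 * n) ≤ 1)
    (hA : DenseOn (w * D) F A) (hB : DenseOn D F B) (hBne : B.Nonempty) :
    2 * ((A.filter (fun x => ¬ Good gd n k₀ D F B x)).card : ℝ) ≤ A.card := by
  have hn' : (1 : ℝ) ≤ n := by exact_mod_cast hn
  have hBpos : (0 : ℝ) < B.card := by exact_mod_cast hBne.card_pos
  -- relevant triples
  let Ψ : Finset N → Finset N → Finset (N → Λ) := fun K J =>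
    A.filter (fun x => J ⊆ F ∧ K ⊆ F ∧ Disjoint J K ∧ k₀ * J.card < K.card ∧ ∃ y : N → Λ,
      (1 / (4 * n) : ℝ) ^ K.card * (D ^ J.card * B.card) < |∑ b ∈ fib B J y, chi gd K x b|)
  have hcover : A.filter (fun x => ¬ Good gd n k₀ D F B x) ⊆
      (Finset.univ.powerset.erase ∅).biUnion (fun K => Finset.univ.powerset.biUnion (fun J => Ψ K J)) := by
    intro x hx
    obtain ⟨hxA, hxb⟩ := Finset.mem_filter.1 hx
    unfold Good at hxb
    push Not at hxb
    obtain ⟨J, hJ, K, hK, hd, y, hlt⟩ := hxb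
    have hlt2 : k₀ * J.card < K.card := by
      by_contra hle
      push Not at hle
      refine absurd hlt (not_lt.2 ?_)
      have h1 : |∑ b ∈ fib B J y, chi gd K x b| ≤ D ^ J.card * B.card := by
        refine le_trans (Finset.abs_sum_le_sum_abs _ _) ?_
        simp only [chi_abs]
        simpa using hB J hJ y
      refine h1.trans (le_mul_of_one_le_left (by positivity) ?_)
      rw [one_div, inv_pow, ← div_eq_mul_inv, one_le_div (by positivity)]
      exact pow_le_pow_right₀ (by linarith) hle
    simp only [Finset.mem_biUnion, Finset.mem_erase, Finset.powerset_univ, Finset.mem_univ,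
      and_true, true_and]
    refine ⟨K, ?_, J, ?_⟩
    · rintro rfl; simp at hlt2
    · refine Finset.mem_filter.2 ⟨hxA, hJ, hK, hd, hlt2, y, lt_of_le_of_lt ?_ hlt⟩
      refine mul_le_mul_of_nonneg_right ?_ (by positivity)
      exact le_mul_of_one_le_left (by positivity) (one_le_pow₀ (by linarith))
  set P : ℝ := τ * w * c * D ^ 2 * (4 * n) ^ 2 with hP
  have hP0 : 0 ≤ P := by positivity
  have hQ0 : 0 ≤ w * c * D ^ 2 * (4 * (n : ℝ)) ^ 2 := by positivity
  -- bound for a single pair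
  have hpair : ∀ K J : Finset N, ((Ψ K J).card : ℝ) ≤
      (if J.card ≤ K.card then P ^ K.card * A.card else 0) := by
    intro K J
    by_cases hcond : J ⊆ F ∧ K ⊆ F ∧ Disjoint J K ∧ k₀ * J.card < K.card
    swap
    · have : Ψ K J = ∅ := by
        refine Finset.filter_eq_empty_iff.2 fun x _ hx => hcond ⟨hx.1, hx.2.1, hx.2.2.1, hx.2.2.2.1⟩
      rw [this]
      split_ifs <;> simp
      positivity
    obtain ⟨hJ, hK, hd, hlt⟩ := hcond
    have hJK : J.card ≤ K.card := by nlinarith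
    rw [if_pos hJK]
    set θ : ℝ := (1 / (4 * n) : ℝ) ^ K.card * (D ^ J.card * B.card) with hθ
    have hθ0 : 0 < θ := by positivity
    -- reduce to y determined by restrictions to J
    rcases isEmpty_or_nonempty (N → Λ) with hemp | ⟨⟨y₀⟩⟩
    · have : Ψ K J = ∅ := by
        refine Finset.eq_empty_of_forall_notMem fun x _ => hemp.elim x
      rw [this]; simp; positivity
    let ext : (J → Λ) → (N → Λ) := fun y j => if h : j ∈ J then y ⟨j, h⟩ else y₀ j
    have hfibext : ∀ y : N → Λ, fib B J y = fib B J (ext (fun j => y j)) := by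
      intro y
      unfold fib
      refine Finset.filter_congr fun b _ => ?_
      refine forall_congr' fun j => forall_congr' fun hj => ?_
      simp [ext, hj]
    let Φ : (J → Λ) → Finset (N → Λ) := fun y =>
      A.filter (fun x => θ < |∑ b ∈ fib B J (ext y), chi gd K x b|)
    have hcov2 : Ψ K J ⊆ Finset.univ.biUnion Φ := by
      intro x hx
      obtain ⟨hxA, _, _, _, _, y, hy⟩ := Finset.mem_filter.1 hx
      rw [hfibext] at hy
      have hmem : x ∈ Φ (fun j => y j) := Finset.mem_filter.2 (And.intro hxA hy)
      exact Finset.mem_biUnion.2 ⟨(fun j => y j), Finset.mem_univ _, hmem⟩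
    have hΦ : ∀ y, ((Φ y).card : ℝ) ≤ (w * c * D ^ 2 * (4 * n) ^ 2) ^ K.card * A.card := by
      intro y
      have h2 := second_moment gd c hc hM A B F D (w * D) hD.le (by positivity) hA hB J K hJ hK hd (ext y)
      have h1 : ((Φ y).card : ℝ) * θ ^ 2 ≤ ∑ x ∈ A, (∑ b ∈ fib B J (ext y), chi gd K x b) ^ 2 := by
        calc ((Φ y).card : ℝ) * θ ^ 2 = ∑ x ∈ Φ y, θ ^ 2 := by
              rw [Finset.sum_const, nsmul_eq_mul]
          _ ≤ ∑ x ∈ Φ y, (∑ b ∈ fib B J (ext y), chi gd K x b) ^ 2 :=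
              Finset.sum_le_sum fun x hx => by
                rw [← sq_abs (∑ b ∈ fib B J (ext y), chi gd K x b)]
                exact pow_le_pow_left₀ hθ0.le (Finset.mem_filter.1 hx).2.le 2
          _ ≤ _ := Finset.sum_le_sum_of_subset_of_nonneg (Finset.filter_subset _ _)
              fun _ _ _ => sq_nonneg _
      have h3 : (((w * D) ^ K.card * A.card) * (c ^ K.card *
        ((D ^ (J.card + K.card) * B.card) * (D ^ J.card * B.card))) : ℝ) =
          ((w * c * D ^ 2 * (4 * n) ^ 2) ^ K.card * A.card) * θ ^ 2 := by
        rw [hθ]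
        have : ((4 * (n : ℝ)) ^ 2) ^ K.card * ((1 / (4 * (n : ℝ))) ^ K.card) ^ 2 = 1 := by
          rw [← pow_mul, ← pow_mul, mul_comm K.card 2, ← mul_pow, mul_one_div_cancel (by positivity),
            one_pow]
        calc _ = (w ^ K.card * c ^ K.card * (D ^ K.card) ^ 2 * A.card * (D ^ J.card) ^ 2 *
              (B.card : ℝ) ^ 2) * 1 := by
              rw [mul_pow, pow_add]; ring
          _ = (w ^ K.card * c ^ K.card * (D ^ K.card) ^ 2 * A.card * (D ^ J.card) ^ 2 *
              (B.card : ℝ) ^ 2) * (((4 * (n : ℝ)) ^ 2) ^ K.card * ((1 / (4 * (n : ℝ))) ^ K.card) ^ 2) := by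
              rw [this]
          _ = _ := by
              rw [mul_pow (w * c * D ^ 2), mul_pow (w * c), mul_pow w]
              generalize ((4 * (n : ℝ)) ^ 2) ^ K.card = u1
              generalize (1 / (4 * (n : ℝ))) ^ K.card = u2
              ring
      have h4 := (h1.trans h2).trans_eq h3
      exact le_of_mul_le_mul_right h4 (pow_pos hθ0 2)
    calc ((Ψ K J).card : ℝ) ≤ ((Finset.univ.biUnion Φ).card : ℝ) := by
          exact Nat.cast_le.2 (Finset.card_le_card hcov2)
      _ ≤ ∑ y, ((Φ y).card : ℝ) := by
          rw [← Nat.cast_sum]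
          exact Nat.cast_le.2 Finset.card_biUnion_le
      _ ≤ ∑ y : J → Λ, (w * c * D ^ 2 * (4 * n) ^ 2) ^ K.card * A.card :=
          Finset.sum_le_sum fun y _ => hΦ y
      _ = (Fintype.card Λ : ℝ) ^ J.card * ((w * c * D ^ 2 * (4 * n) ^ 2) ^ K.card * A.card) := by
          rw [Finset.sum_const, nsmul_eq_mul, Finset.card_univ, Fintype.card_fun, Fintype.card_coe,
            Nat.cast_pow]
      _ ≤ τ ^ K.card * ((w * c * D ^ 2 * (4 * n) ^ 2) ^ K.card * A.card) := by
          refine mul_le_mul_of_nonneg_right ?_ (mul_nonneg (pow_nonneg hQ0 _) (Nat.cast_nonneg _))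
          calc (Fintype.card Λ : ℝ) ^ J.card ≤ (τ ^ k₀) ^ J.card :=
                pow_le_pow_left₀ (Nat.cast_nonneg _) hτL _
            _ = τ ^ (k₀ * J.card) := by rw [pow_mul]
            _ ≤ τ ^ K.card := pow_le_pow_right₀ hτ hlt.le
      _ = P ^ K.card * A.card := by
          rw [← mul_assoc, ← mul_pow, hP]; ring_nf
  have hsumJ : ∀ K : Finset N, ∑ J ∈ Finset.univ.powerset, ((Ψ K J).card : ℝ) ≤
      3 / 2 * ((4 * n) * P) ^ K.card * A.card := by
    intro K
    have := sum_powerset_le n hn (Finset.univ : Finset N) (by simpa using hnN)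
    calc ∑ J ∈ Finset.univ.powerset, ((Ψ K J).card : ℝ) ≤
        ∑ J ∈ Finset.univ.powerset, (1 / (4 * n) : ℝ) ^ J.card * (((4 * n) * P) ^ K.card * A.card) := by
          refine Finset.sum_le_sum fun J _ => (hpair K J).trans ?_
          split_ifs with h
          · rw [mul_pow (4 * (n : ℝ)) P, mul_assoc ((4 * (n : ℝ)) ^ K.card),
              ← mul_assoc ((1 / (4 * (n : ℝ))) ^ J.card)]
            refine le_mul_of_one_le_left (mul_nonneg (pow_nonneg hP0 _) (Nat.cast_nonneg _)) ?_
            rw [one_div, inv_pow, mul_comm, ← div_eq_mul_inv, one_le_div (by positivity)]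
            exact pow_le_pow_right₀ (by linarith) h
          · positivity
      _ = (∑ J ∈ Finset.univ.powerset, (1 / (4 * n) : ℝ) ^ J.card) * (((4 * n) * P) ^ K.card * A.card) := by
          rw [Finset.sum_mul]
      _ ≤ 3 / 2 * (((4 * n) * P) ^ K.card * A.card) :=
          mul_le_mul_of_nonneg_right this (by positivity)
      _ = _ := by ring
  have hb : (4 * n : ℝ) * P ≤ 1 / 4 * (1 / (4 * n)) := by
    rw [show (1 : ℝ) / 4 * (1 / (4 * n)) = 1 / (16 * n) by field_simp; norm_num,
      le_div_iff₀ (by positivity)]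
    calc (4 * n : ℝ) * P * (16 * n) = _ := by rw [hP]; ring
      _ ≤ 1 := hnum
  have hfin : ((A.filter (fun x => ¬ Good gd n k₀ D F B x)).card : ℝ) ≤
      ∑ K ∈ (Finset.univ : Finset N).powerset.erase ∅, 3 / 2 * ((4 * n) * P) ^ K.card * A.card := by
    calc ((A.filter (fun x => ¬ Good gd n k₀ D F B x)).card : ℝ) ≤ _ := by
          exact Nat.cast_le.2 (Finset.card_le_card hcover)
      _ ≤ ∑ K ∈ (Finset.univ : Finset N).powerset.erase ∅, ∑ J ∈ Finset.univ.powerset, ((Ψ K J).card : ℝ) := by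
          have : (((Finset.univ : Finset N).powerset.erase ∅).biUnion
            (fun K => Finset.univ.powerset.biUnion (fun J => Ψ K J))).card ≤
            ∑ K ∈ (Finset.univ : Finset N).powerset.erase ∅, ∑ J ∈ Finset.univ.powerset, (Ψ K J).card :=
            Finset.card_biUnion_le.trans (Finset.sum_le_sum fun K _ => Finset.card_biUnion_le)
          exact_mod_cast this
      _ ≤ _ := Finset.sum_le_sum fun K _ => hsumJ K
  have hps := sum_powerset_le n hn (Finset.univ : Finset N) (by simpa using hnN)
  rw [← Finset.add_sum_erase _ _ (Finset.empty_mem_powerset _)] at hps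
  simp only [Finset.card_empty, pow_zero] at hps
  have hlast : ∑ K ∈ (Finset.univ : Finset N).powerset.erase ∅, 3 / 2 * ((4 * n) * P) ^ K.card * (A.card : ℝ) ≤
      3 / 8 * A.card * ∑ K ∈ (Finset.univ : Finset N).powerset.erase ∅, ((1 : ℝ) / (4 * n)) ^ K.card := by
    rw [Finset.mul_sum]
    refine Finset.sum_le_sum fun K hK => ?_
    have hK1 : K.card ≠ 0 := by
      simpa using (Finset.mem_erase.1 hK).1
    have h1 : ((4 * n : ℝ) * P) ^ K.card ≤ (1 / 4 * (1 / (4 * n))) ^ K.card :=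
      pow_le_pow_left₀ (by positivity) hb _
    have h2 : (1 / 4 * (1 / (4 * n)) : ℝ) ^ K.card ≤ 1 / 4 * (1 / (4 * n)) ^ K.card := by
      rw [mul_pow]
      refine mul_le_mul_of_nonneg_right ?_ (by positivity)
      exact pow_le_of_le_one (by norm_num) (by norm_num) hK1
    calc 3 / 2 * ((4 * n) * P) ^ K.card * (A.card : ℝ)
        ≤ 3 / 2 * (1 / 4 * (1 / (4 * n)) ^ K.card) * (A.card : ℝ) := by
          have := h1.trans h2
          gcongr
      _ = _ := by ring
  have hA0 : (0 : ℝ) ≤ A.card := by positivity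
  nlinarith [hfin.trans hlast]

/-- points of `B` whose gadget values with `x` on `I` are given by `z`. -/
def cons (gd : Λ → Λ → Bool) (B : Finset (N → Λ)) (I : Finset N) (x : N → Λ) (z : N → Bool) :
    Finset (N → Λ) :=
  B.filter (fun b => ∀ j ∈ I, gd (x j) (b j) = z j)

lemma cons_card (gd : Λ → Λ → Bool) (B : Finset (N → Λ)) (I : Finset N) (x : N → Λ)
    (z : N → Bool) :
    ((cons gd B I x z).card : ℝ) * 2 ^ I.card =
      ∑ K ∈ I.powerset, (∏ j ∈ K, sg (z j)) * ∑ b ∈ B, chi gd K x b := by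
  have h1 : ∀ b : N → Λ, (if (∀ j ∈ I, gd (x j) (b j) = z j) then (1 : ℝ) else 0) * 2 ^ I.card =
      ∑ K ∈ I.powerset, (∏ j ∈ K, sg (z j)) * chi gd K x b := by
    intro b
    have h2 := Finset.prod_add (fun j => sg (z j) * sg (gd (x j) (b j))) (fun _ => (1 : ℝ)) I
    simp only [Finset.prod_const_one, mul_one, Finset.prod_mul_distrib] at h2
    unfold chi
    rw [← h2]
    split_ifs with h
    · rw [one_mul, ← Finset.prod_const]
      refine Finset.prod_congr rfl fun j hj => ?_
      rw [h j hj, sg_sq]; norm_num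
    · push Not at h
      obtain ⟨j, hj, hne⟩ := h
      rw [zero_mul, eq_comm]
      refine Finset.prod_eq_zero hj ?_
      revert hne
      cases gd (x j) (b j) <;> cases z j <;> simp [sg]
  unfold cons
  rw [Finset.card_filter]
  push_cast
  rw [Finset.sum_mul]
  simp only [Finset.mul_sum]
  rw [Finset.sum_comm]
  exact Finset.sum_congr rfl fun b _ => h1 b

lemma good_lower (gd : Λ → Λ → Bool) (B : Finset (N → Λ)) (F : Finset N) (n k₀ : ℕ) (D : ℝ)
    (hn : 1 ≤ n) (hnN : Fintype.card N ≤ n) (x : N → Λ)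
    (hx : Good gd n k₀ D F B x) (I : Finset N) (hI : I ⊆ F) (z : N → Bool) :
    (B.card : ℝ) ≤ 2 * 2 ^ I.card * (cons gd B I x z).card := by
  have hps := sum_powerset_le n hn I ((Finset.card_le_univ I).trans hnN)
  rw [← Finset.add_sum_erase _ _ (Finset.empty_mem_powerset _)] at hps
  simp only [Finset.card_empty, pow_zero] at hps
  have h := cons_card gd B I x z
  rw [← Finset.add_sum_erase _ _ (Finset.empty_mem_powerset _)] at h
  simp only [Finset.prod_empty, one_mul, chi, Finset.sum_const, nsmul_eq_mul, mul_one] at h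
  have h2 : |∑ K ∈ I.powerset.erase ∅, (∏ j ∈ K, sg (z j)) * ∑ b ∈ B, chi gd K x b| ≤
      (∑ K ∈ I.powerset.erase ∅, ((1 : ℝ) / (4 * n)) ^ K.card) * B.card := by
    refine (Finset.abs_sum_le_sum_abs _ _).trans ?_
    rw [Finset.sum_mul]
    refine Finset.sum_le_sum fun K hK => ?_
    have hKI := Finset.mem_powerset.1 (Finset.mem_erase.1 hK).2
    have := hx ∅ (by simp) K (hKI.trans hI) (by simp) x
    rw [fib_empty] at this
    rw [abs_mul, Finset.abs_prod]
    simpa [sg_abs] using this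
  have h3 := abs_le.1 h2
  have hB0 : (0 : ℝ) ≤ B.card := by positivity
  simp only [chi] at h3
  nlinarith [h3.1]

lemma good_dense (gd : Λ → Λ → Bool) (B : Finset (N → Λ)) (F : Finset N) (n k₀ : ℕ) (D : ℝ)
    (hD : 0 < D) (hn : 1 ≤ n) (hnN : Fintype.card N ≤ n) (x : N → Λ)
    (hx : Good gd n k₀ D F B x) (I : Finset N) (hI : I ⊆ F) (z : N → Bool) :
    DenseOn (3 * (4 * n) ^ k₀ * D) (F \ I) (cons gd B I x z) := by
  intro J hJ y
  rcases J.eq_empty_or_nonempty with rfl | hJne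
  · simp [fib_empty]
  have hJF : J ⊆ F := hJ.trans Finset.sdiff_subset
  have hJI : Disjoint J I := Finset.disjoint_of_subset_left hJ Finset.sdiff_disjoint
  have hsw : fib (cons gd B I x z) J y = cons gd (fib B J y) I x z := by
    unfold fib cons
    rw [Finset.filter_filter, Finset.filter_filter]
    exact Finset.filter_congr fun b _ => and_comm
  have hn' : (1 : ℝ) ≤ n := by exact_mod_cast hn
  have hps := sum_powerset_le n hn I ((Finset.card_le_univ I).trans hnN)
  have h1 : ((fib (cons gd B I x z) J y).card : ℝ) * 2 ^ I.card ≤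
      3 / 2 * ((4 * n : ℝ) ^ (k₀ * J.card) * (D ^ J.card * B.card)) := by
    rw [hsw, cons_card]
    refine (le_abs_self _).trans ((Finset.abs_sum_le_sum_abs _ _).trans ?_)
    calc _ ≤ ∑ K ∈ I.powerset, ((1 : ℝ) / (4 * n)) ^ K.card *
          ((4 * n : ℝ) ^ (k₀ * J.card) * (D ^ J.card * B.card)) := by
          refine Finset.sum_le_sum fun K hK => ?_
          have hKI := Finset.mem_powerset.1 hK
          have := hx J hJF K (hKI.trans hI) (Finset.disjoint_of_subset_right hKI hJI) y
          rw [abs_mul, Finset.abs_prod]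
          simp only [sg_abs, Finset.prod_const_one, one_mul]
          refine this.trans_eq (by ring)
      _ ≤ _ := by
          rw [← Finset.sum_mul]
          exact mul_le_mul_of_nonneg_right hps (by positivity)
  have h2 := good_lower gd B F n k₀ D hn hnN x hx I hI z
  have h3 : ((fib (cons gd B I x z) J y).card : ℝ) * 2 ^ I.card ≤
      ((3 * (4 * n) ^ k₀ * D) ^ J.card * (cons gd B I x z).card) * 2 ^ I.card := by
    calc _ ≤ _ := h1
      _ ≤ 3 / 2 * ((4 * n : ℝ) ^ (k₀ * J.card) * (D ^ J.card *
            (2 * 2 ^ I.card * (cons gd B I x z).card))) := by gcongr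
      _ = 3 * (((4 * n : ℝ) ^ k₀) ^ J.card * D ^ J.card * (cons gd B I x z).card * 2 ^ I.card) := by
          rw [pow_mul]; ring
      _ ≤ 3 ^ J.card * (((4 * n : ℝ) ^ k₀) ^ J.card * D ^ J.card * (cons gd B I x z).card * 2 ^ I.card) := by
          refine mul_le_mul_of_nonneg_right ?_ (by positivity)
          exact le_self_pow₀ (by norm_num) hJne.card_pos.ne'
      _ = _ := by rw [mul_pow, mul_pow]; ring
  exact le_of_mul_le_mul_right h3 (by positivity)

end Prune
end


open Classical

set_option linter.unusedSectionVars false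

noncomputable section

/-! ### Restoring density and simulating a protocol -/

section Sim
variable {N Λ : Type} [Fintype N] [DecidableEq N] [Fintype Λ]

structure Par (gd : Λ → Λ → Bool) (c : ℝ) (N : Type) [Fintype N] (n k₀ : ℕ) (D τ : ℝ) : Prop where
  hc : 0 ≤ c
  h1 : L2B gd c
  h2 : L2B (fun u v => gd v u) c
  hD : 0 < D
  hn : 1 ≤ n
  hnN : Fintype.card N ≤ n
  hk₀ : 1 ≤ k₀
  hτ : 1 ≤ τ
  hτL : (Fintype.card Λ : ℝ) ≤ τ ^ k₀
  hnum : (4 * n) * τ * (3 * (4 * n) ^ k₀) * c * D ^ 2 * (4 * n) ^ 2 * (16 * n) ≤ 1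

lemma Par.swap {gd : Λ → Λ → Bool} {c : ℝ} {n k₀ : ℕ} {D τ : ℝ} (h : Par gd c N n k₀ D τ) :
    Par (fun u v => gd v u) c N n k₀ D τ :=
  { h with h1 := h.h2, h2 := h.h1 }

structure St (H : Finset N → (N → Bool) → Prop) (gd : Λ → Λ → Bool) (F0 : Finset N)
    (A B : Finset (N → Λ)) (IA IB : Finset N) (ρ : N → Bool) : Prop where
  neA : A.Nonempty
  neB : B.Nonempty
  subA : IA ⊆ F0
  subB : IB ⊆ F0
  disj : Disjoint IA IB
  cA : ∀ x ∈ A, ∀ x' ∈ A, ∀ e ∈ IA, x e = x' e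
  cB : ∀ x ∈ B, ∀ x' ∈ B, ∀ e ∈ IB, x e = x' e
  val : ∀ x ∈ A, ∀ y ∈ B, ∀ e ∈ IA ∪ IB, gd (x e) (y e) = ρ e
  hard : H (IA ∪ IB) ρ

lemma St.swap {H : Finset N → (N → Bool) → Prop} {gd : Λ → Λ → Bool} {F0 : Finset N}
    {A B : Finset (N → Λ)} {IA IB : Finset N} {ρ : N → Bool} (h : St H gd F0 A B IA IB ρ) :
    St H (fun u v => gd v u) F0 B A IB IA ρ where
  neA := h.neB
  neB := h.neA
  subA := h.subB
  subB := h.subA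
  disj := h.disj.symm
  cA := h.cB
  cB := h.cA
  val := fun x hx y hy e he => h.val y hy x hx e (by rwa [Finset.union_comm])
  hard := by rw [Finset.union_comm]; exact h.hard

lemma St.mono {H : Finset N → (N → Bool) → Prop} {gd : Λ → Λ → Bool} {F0 : Finset N}
    {A B A' B' : Finset (N → Λ)} {IA IB : Finset N} {ρ : N → Bool} (h : St H gd F0 A B IA IB ρ)
    (hA : A' ⊆ A) (hB : B' ⊆ B) (nA : A'.Nonempty) (nB : B'.Nonempty) :
    St H gd F0 A' B' IA IB ρ where
  neA := nA
  neB := nB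
  subA := h.subA
  subB := h.subB
  disj := h.disj
  cA := fun x hx x' hx' => h.cA x (hA hx) x' (hA hx')
  cB := fun x hx x' hx' => h.cB x (hB hx) x' (hB hx')
  val := fun x hx y hy => h.val x (hA hx) y (hB hy)
  hard := h.hard

def wt (D : ℝ) (A B : Finset (N → Λ)) (IA IB : Finset N) : ℝ :=
  (A.card : ℝ) * B.card * (8 / D) ^ (IA.card + IB.card)

lemma wt_swap (D : ℝ) (A B : Finset (N → Λ)) (IA IB : Finset N) :
    wt D A B IA IB = wt D B A IB IA := by
  unfold wt; rw [add_comm]; ring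

lemma dense_sub {D : ℝ} {F F' : Finset N} {B : Finset (N → Λ)} (h : DenseOn D F B) (hF : F' ⊆ F) :
    DenseOn D F' B := fun J hJ y => h J (hJ.trans hF) y

lemma exists_max_fib (D : ℝ) (hD : 0 < D) (F : Finset N) (A : Finset (N → Λ)) (hA : A.Nonempty) :
    ∃ I ⊆ F, ∃ x ∈ A, D ^ I.card * A.card ≤ (fib A I x).card ∧
      DenseOn D (F \ I) (fib A I x) := by
  have hApos : (0 : ℝ) < A.card := by exact_mod_cast hA.card_pos
  let C := F.powerset.filter (fun I => ∃ x, D ^ I.card * A.card ≤ ((fib A I x).card : ℝ))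
  have hC : C.Nonempty := by
    obtain ⟨x, hx⟩ := hA
    exact ⟨∅, Finset.mem_filter.2 ⟨Finset.empty_mem_powerset _, x, by simp [fib_empty]⟩⟩
  obtain ⟨I, hI, hmax⟩ := Finset.exists_max_image C Finset.card hC
  obtain ⟨hIF, x, hx⟩ := Finset.mem_filter.1 hI
  have hIF := Finset.mem_powerset.1 hIF
  have hne : (fib A I x).Nonempty := by
    rw [← Finset.card_pos]
    have : (0 : ℝ) < (fib A I x).card := lt_of_lt_of_le (by positivity) hx
    exact_mod_cast this
  obtain ⟨x0, hx0⟩ := hne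
  obtain ⟨hx0A, hx0e⟩ := Finset.mem_filter.1 hx0
  have hfe : fib A I x = fib A I x0 := by
    unfold fib
    refine Finset.filter_congr fun b _ => forall_congr' fun j => forall_congr' fun hj => ?_
    rw [hx0e j hj]
  rw [hfe] at hx
  refine ⟨I, hIF, x0, hx0A, hx, ?_⟩
  intro J hJ y
  by_contra hlt
  push Not at hlt
  rcases J.eq_empty_or_nonempty with rfl | hJne
  · simp [fib_empty] at hlt
  have hJI : Disjoint I J := by
    exact (Finset.disjoint_of_subset_left hJ Finset.sdiff_disjoint).symm
  let y' : N → Λ := fun j => if j ∈ I then x0 j else y j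
  have hff : fib (fib A I x0) J y = fib A (I ∪ J) y' := by
    unfold fib
    rw [Finset.filter_filter]
    refine Finset.filter_congr fun b _ => ?_
    constructor
    · rintro ⟨h1, h2⟩ j hj
      by_cases hjI : j ∈ I
      · simp [y', hjI, h1 j hjI]
      · simp only [y', hjI, if_false]
        exact h2 j ((Finset.mem_union.1 hj).resolve_left hjI)
    · intro h
      refine ⟨fun j hj => ?_, fun j hj => ?_⟩
      · have := h j (Finset.mem_union_left _ hj)
        simpa [y', hj] using this
      · have := h j (Finset.mem_union_right _ hj)
        have hjI : j ∉ I := fun h' => (Finset.disjoint_left.1 hJI h') hj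
        simpa [y', hjI] using this
  have hcardIJ : (I ∪ J).card = I.card + J.card := Finset.card_union_of_disjoint hJI
  have hmem : I ∪ J ∈ C := by
    refine Finset.mem_filter.2 ⟨Finset.mem_powerset.2
      (Finset.union_subset hIF (hJ.trans Finset.sdiff_subset)), y', ?_⟩
    rw [← hff, hcardIJ]
    refine le_trans ?_ hlt.le
    calc D ^ (I.card + J.card) * (A.card : ℝ) = D ^ J.card * (D ^ I.card * A.card) := by ring
      _ ≤ _ := mul_le_mul_of_nonneg_left hx (by positivity)
  have := hmax _ hmem
  have h3 := hJne.card_pos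
  omega

lemma restore (H : Finset N → (N → Bool) → Prop)
    (hH : ∀ Q I ρ, H Q ρ → ∃ ρ', (∀ e ∈ Q, ρ' e = ρ e) ∧ H (Q ∪ I) ρ')
    (c : ℝ) (n k₀ : ℕ) (D τ : ℝ) (F0 : Finset N) (k : ℕ) :
    ∀ (gd : Λ → Λ → Bool) (A B : Finset (N → Λ)) (IA IB : Finset N) (ρ : N → Bool),
    Par gd c N n k₀ D τ → St H gd F0 A B IA IB ρ → (F0 \ (IA ∪ IB)).card ≤ k →
    DenseOn (3 * (4 * n) ^ k₀ * D) (F0 \ (IA ∪ IB)) A → DenseOn D (F0 \ (IA ∪ IB)) B →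
    ∃ A' B' IA' IB' ρ', A' ⊆ A ∧ B' ⊆ B ∧ St H gd F0 A' B' IA' IB' ρ' ∧
      DenseOn D (F0 \ (IA' ∪ IB')) A' ∧ DenseOn D (F0 \ (IA' ∪ IB')) B' ∧
      wt D A B IA IB ≤ 2 * wt D A' B' IA' IB' := by
  induction k using Nat.strong_induction_on with
  | _ k ih =>
  intro gd A B IA IB ρ hP hS hk hA hB
  set F := F0 \ (IA ∪ IB) with hF
  have hD := hP.hD
  have hbad := bad_le_half gd c hP.hc hP.h1 A B F n k₀ D (3 * (4 * n) ^ k₀) τ hD (by positivity)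
    hP.hn hP.hnN hP.hk₀ hP.hτ hP.hτL hP.hnum hA hB hS.neB
  set A1 := A.filter (fun x => Good gd n k₀ D F B x) with hA1
  have hsplit : (A1.card : ℝ) + (A.filter (fun x => ¬ Good gd n k₀ D F B x)).card = A.card := by
    exact_mod_cast Finset.card_filter_add_card_filter_not (s := A) (fun x => Good gd n k₀ D F B x)
  have hApos : (0 : ℝ) < A.card := by exact_mod_cast hS.neA.card_pos
  have hBpos : (0 : ℝ) < B.card := by exact_mod_cast hS.neB.card_pos
  have hA1h : (A.card : ℝ) ≤ 2 * A1.card := by linarith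
  have hA1ne : A1.Nonempty := by
    rw [← Finset.card_pos]
    have : (0 : ℝ) < A1.card := by linarith
    exact_mod_cast this
  obtain ⟨I, hIF, x, hxA1, hlow, hdens⟩ := exists_max_fib D hD F A1 hA1ne
  have hxgood := (Finset.mem_filter.1 hxA1).2
  rcases I.eq_empty_or_nonempty with rfl | hIne
  · refine ⟨A1, B, IA, IB, ρ, Finset.filter_subset _ _, subset_rfl,
      hS.mono (Finset.filter_subset _ _) subset_rfl hA1ne hS.neB, ?_, hB, ?_⟩
    · simpa [fib_empty] using hdens
    · unfold wt
      calc (A.card : ℝ) * B.card * (8 / D) ^ (IA.card + IB.card)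
          ≤ (2 * A1.card) * B.card * (8 / D) ^ (IA.card + IB.card) := by gcongr
        _ = _ := by ring
  set A2 := fib A1 I x with hA2
  obtain ⟨ρ', hρ', hHρ'⟩ := hH (IA ∪ IB) I ρ hS.hard
  set B2 := cons gd B I x ρ' with hB2
  have hBlow := good_lower gd B F n k₀ D hP.hn hP.hnN x hxgood I hIF ρ'
  have hBd := good_dense gd B F n k₀ D hD hP.hn hP.hnN x hxgood I hIF ρ'
  rw [← hB2] at hBlow hBd
  have hA2A : A2 ⊆ A := (Finset.filter_subset _ _).trans (Finset.filter_subset _ _)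
  have hB2B : B2 ⊆ B := Finset.filter_subset _ _
  have hA2ne : A2.Nonempty := ⟨x, Finset.mem_filter.2 ⟨hxA1, fun _ _ => rfl⟩⟩
  have hB2ne : B2.Nonempty := by
    rw [← Finset.card_pos]
    by_contra h0
    have h0 : B2.card = 0 := by omega
    rw [h0] at hBlow
    simp at hBlow
    have := hS.neB
    simp [hBlow] at this
  have hId : Disjoint I (IA ∪ IB) := Finset.disjoint_of_subset_left hIF Finset.sdiff_disjoint
  have hS2 : St H gd F0 A2 B2 (IA ∪ I) IB ρ' := by
    refine ⟨hA2ne, hB2ne, Finset.union_subset hS.subA (hIF.trans Finset.sdiff_subset), hS.subB,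
      ?_, ?_, ?_, ?_, ?_⟩
    · rw [Finset.disjoint_union_left]
      exact ⟨hS.disj, Finset.disjoint_of_subset_right Finset.subset_union_right hId⟩
    · intro a ha a' ha' e he
      rcases Finset.mem_union.1 he with he | he
      · exact hS.cA a (hA2A ha) a' (hA2A ha') e he
      · rw [(Finset.mem_filter.1 ha).2 e he, (Finset.mem_filter.1 ha').2 e he]
    · exact fun a ha a' ha' => hS.cB a (hB2B ha) a' (hB2B ha')
    · intro a ha b hb e he
      by_cases heI : e ∈ I
      · rw [(Finset.mem_filter.1 ha).2 e heI]
        exact (Finset.mem_filter.1 hb).2 e heI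
      · have he' : e ∈ IA ∪ IB := by
          simp only [Finset.mem_union] at he ⊢
          tauto
        rw [hρ' e he']
        exact hS.val a (hA2A ha) b (hB2B hb) e he'
    · rwa [Finset.union_right_comm]
  have hFeq : F0 \ (IA ∪ I ∪ IB) = F \ I := by
    rw [hF]; ext e; simp only [Finset.mem_sdiff, Finset.mem_union]; tauto
  have hFeq' : F0 \ (IB ∪ (IA ∪ I)) = F \ I := by rw [Finset.union_comm, hFeq]
  have hlt : (F0 \ (IB ∪ (IA ∪ I))).card < k := by
    rw [hFeq']
    refine lt_of_lt_of_le (Finset.card_lt_card ?_) hk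
    exact Finset.sdiff_ssubset hIF hIne
  obtain ⟨B', A', IB', IA', ρ'', hB', hA', hS', hdB, hdA, hw⟩ := ih _ hlt (fun u v => gd v u) B2 A2 IB (IA ∪ I)
    ρ' hP.swap hS2.swap le_rfl (by rw [hFeq']; exact hBd) (by rw [hFeq']; exact hdens)
  refine ⟨A', B', IA', IB', ρ'', hA'.trans hA2A, hB'.trans hB2B, hS'.swap,
    by rwa [Finset.union_comm], by rwa [Finset.union_comm], ?_⟩
  rw [wt_swap D A' B']
  refine le_trans ?_ hw
  rw [wt_swap D B2 A2]
  unfold wt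
  have hci : (IA ∪ I).card = IA.card + I.card := Finset.card_union_of_disjoint
    (Finset.disjoint_of_subset_right Finset.subset_union_left hId).symm
  rw [hci, show IA.card + I.card + IB.card = I.card + (IA.card + IB.card) by ring,
    pow_add _ I.card (IA.card + IB.card)]
  have h4 : (4 : ℝ) ≤ 4 ^ I.card := by
    calc (4 : ℝ) = 4 ^ 1 := by norm_num
      _ ≤ 4 ^ I.card := pow_le_pow_right₀ (by norm_num) hIne.card_pos
  have hA3 : (A.card : ℝ) * D ^ I.card ≤ 2 * A2.card := by
    calc (A.card : ℝ) * D ^ I.card ≤ (2 * A1.card) * D ^ I.card := by gcongr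
      _ = 2 * (D ^ I.card * A1.card) := by ring
      _ ≤ _ := by gcongr
  have hkey : (A.card : ℝ) * B.card ≤ A2.card * B2.card * (8 / D) ^ I.card := by
    rw [div_pow, mul_div_assoc', le_div_iff₀ (by positivity)]
    calc (A.card : ℝ) * B.card * D ^ I.card = (A.card * D ^ I.card) * B.card := by ring
      _ ≤ (2 * A2.card) * (2 * 2 ^ I.card * B2.card) := by gcongr
      _ = A2.card * B2.card * 2 ^ I.card * 4 := by ring
      _ ≤ A2.card * B2.card * 2 ^ I.card * 4 ^ I.card := by gcongr
      _ = _ := by rw [show (8 : ℝ) = 2 * 4 by norm_num, mul_pow]; ring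
  calc (A.card : ℝ) * B.card * (8 / D) ^ (IA.card + IB.card)
      ≤ (A2.card * B2.card * (8 / D) ^ I.card) * (8 / D) ^ (IA.card + IB.card) := by gcongr
    _ = _ := by ring

lemma dense_half (n k₀ : ℕ) (D : ℝ) (hD : 0 < D) (hn : 1 ≤ n) (F : Finset N)
    (A A' : Finset (N → Λ)) (hA : DenseOn D F A) (hsub : A' ⊆ A) (hh : A.card ≤ 2 * A'.card) :
    DenseOn (3 * (4 * n) ^ k₀ * D) F A' := by
  intro J hJ y
  rcases J.eq_empty_or_nonempty with rfl | hJne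
  · simp [fib_empty]
  have hn' : (1 : ℝ) ≤ n := by exact_mod_cast hn
  have hh' : (A.card : ℝ) ≤ 2 * A'.card := by exact_mod_cast hh
  have h1 : (1 : ℝ) ≤ (4 * n) ^ k₀ := one_le_pow₀ (by linarith)
  have h2 : (2 : ℝ) ≤ (3 * (4 * n) ^ k₀) ^ J.card := by
    calc (2 : ℝ) ≤ (3 * (4 * n) ^ k₀) ^ 1 := by rw [pow_one]; linarith
      _ ≤ _ := pow_le_pow_right₀ (by linarith) hJne.card_pos
  calc ((fib A' J y).card : ℝ) ≤ (fib A J y).card := by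
        exact_mod_cast Finset.card_le_card (Finset.filter_subset_filter _ hsub)
    _ ≤ D ^ J.card * A.card := hA J hJ y
    _ ≤ D ^ J.card * (2 * A'.card) := by gcongr
    _ = 2 * (D ^ J.card * A'.card) := by ring
    _ ≤ (3 * (4 * n) ^ k₀) ^ J.card * (D ^ J.card * A'.card) := by gcongr
    _ = _ := by rw [mul_pow _ D]; ring

lemma larger_half (A : Finset (N → Λ)) (hA : A.Nonempty) (h : (N → Λ) → Bool) :
    ∃ b : Bool, A.card ≤ 2 * (A.filter (fun x => h x = b)).card ∧
      (A.filter (fun x => h x = b)).Nonempty := by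
  have hs : (A.filter (fun x => h x = true)).card + (A.filter (fun x => h x = false)).card = A.card := by
    rw [← Finset.card_filter_add_card_filter_not (s := A) (fun x => h x = true)]
    simp
  have hp := hA.card_pos
  by_cases hc : A.card ≤ 2 * (A.filter (fun x => h x = true)).card
  · exact ⟨true, hc, by rw [← Finset.card_pos]; omega⟩
  · exact ⟨false, by omega, by rw [← Finset.card_pos]; omega⟩

lemma wt_nonneg (D : ℝ) (hD : 0 < D) (A B : Finset (N → Λ)) (IA IB : Finset N) : 0 ≤ wt D A B IA IB := by
  unfold wt; positivity

lemma simulate (H : Finset N → (N → Bool) → Prop)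
    (hH : ∀ Q I ρ, H Q ρ → ∃ ρ', (∀ e ∈ Q, ρ' e = ρ e) ∧ H (Q ∪ I) ρ')
    (c : ℝ) (n k₀ : ℕ) (D τ : ℝ) (F0 : Finset N) (gd : Λ → Λ → Bool) (hP : Par gd c N n k₀ D τ)
    {Out : Type} (p : Protocol (N → Λ) (N → Λ) Out) :
    ∀ (A B : Finset (N → Λ)) (IA IB : Finset N) (ρ : N → Bool), St H gd F0 A B IA IB ρ →
    DenseOn D (F0 \ (IA ∪ IB)) A → DenseOn D (F0 \ (IA ∪ IB)) B →
    ∃ A' B' IA' IB' ρ' o, A' ⊆ A ∧ B' ⊆ B ∧ St H gd F0 A' B' IA' IB' ρ' ∧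
      DenseOn D (F0 \ (IA' ∪ IB')) A' ∧ DenseOn D (F0 \ (IA' ∪ IB')) B' ∧
      wt D A B IA IB ≤ 4 ^ p.depth * wt D A' B' IA' IB' ∧
      ∀ x ∈ A', ∀ y ∈ B', p.run x y = o := by
  have hD := hP.hD
  induction p with
  | leaf o =>
    intro A B IA IB ρ hS hA hB
    exact ⟨A, B, IA, IB, ρ, o, subset_rfl, subset_rfl, hS, hA, hB, by simp [Protocol.depth],
      fun _ _ _ _ => rfl⟩
  | nodeA h p0 p1 ih0 ih1 =>
    intro A B IA IB ρ hS hA hB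
    obtain ⟨b, hb, hbne⟩ := larger_half A hS.neA h
    set A1 := A.filter (fun x => h x = b) with hA1
    have hsub : A1 ⊆ A := Finset.filter_subset _ _
    obtain ⟨A2, B2, IA2, IB2, ρ2, hA2, hB2, hS2, hdA2, hdB2, hw2⟩ :=
      restore H hH c n k₀ D τ F0 _ gd A1 B IA IB ρ hP (hS.mono hsub subset_rfl hbne hS.neB) le_rfl
        (dense_half n k₀ D hD hP.hn _ A A1 hA hsub hb) hB
    have hw1 : wt D A B IA IB ≤ 2 * wt D A1 B IA IB := by
      have hb' : (A.card : ℝ) ≤ 2 * A1.card := by exact_mod_cast hb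
      unfold wt
      calc (A.card : ℝ) * B.card * (8 / D) ^ (IA.card + IB.card)
          ≤ (2 * A1.card) * B.card * (8 / D) ^ (IA.card + IB.card) := by gcongr
        _ = _ := by ring
    have key : ∃ q : Protocol (N → Λ) (N → Λ) Out, q.depth + 1 ≤ (Protocol.nodeA h p0 p1).depth ∧
        (∀ x y, h x = b → (Protocol.nodeA h p0 p1).run x y = q.run x y) ∧
        ∃ A' B' IA' IB' ρ' o, A' ⊆ A2 ∧ B' ⊆ B2 ∧ St H gd F0 A' B' IA' IB' ρ' ∧
      DenseOn D (F0 \ (IA' ∪ IB')) A' ∧ DenseOn D (F0 \ (IA' ∪ IB')) B' ∧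
      wt D A2 B2 IA2 IB2 ≤ 4 ^ q.depth * wt D A' B' IA' IB' ∧
      ∀ x ∈ A', ∀ y ∈ B', q.run x y = o := by
      cases b with
      | true => exact ⟨p1, by simp [Protocol.depth], fun x y hx => by simp [Protocol.run, hx],
          ih1 A2 B2 IA2 IB2 ρ2 hS2 hdA2 hdB2⟩
      | false => exact ⟨p0, by simp [Protocol.depth], fun x y hx => by simp [Protocol.run, hx],
          ih0 A2 B2 IA2 IB2 ρ2 hS2 hdA2 hdB2⟩
    obtain ⟨q, hq, hrun, A', B', IA', IB', ρ', o, hA', hB', hS', hdA', hdB', hw', ho⟩ := key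
    refine ⟨A', B', IA', IB', ρ', o, hA'.trans (hA2.trans hsub), hB'.trans hB2, hS', hdA', hdB', ?_, ?_⟩
    · calc wt D A B IA IB ≤ 2 * (2 * (4 ^ q.depth * wt D A' B' IA' IB')) := by linarith
        _ = 4 ^ (q.depth + 1) * wt D A' B' IA' IB' := by ring
        _ ≤ _ := mul_le_mul_of_nonneg_right (pow_le_pow_right₀ (by norm_num) hq) (wt_nonneg D hD _ _ _ _)
    · intro x hx y hy
      rw [hrun x y (Finset.mem_filter.1 (hA2 (hA' hx))).2]
      exact ho x hx y hy
  | nodeB h p0 p1 ih0 ih1 =>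
    intro A B IA IB ρ hS hA hB
    obtain ⟨b, hb, hbne⟩ := larger_half B hS.neB h
    set B1 := B.filter (fun x => h x = b) with hB1
    have hsub : B1 ⊆ B := Finset.filter_subset _ _
    obtain ⟨B2, A2, IB2, IA2, ρ2, hB2, hA2, hS2, hdB2, hdA2, hw2⟩ :=
      restore H hH c n k₀ D τ F0 _ (fun u v => gd v u) B1 A IB IA ρ hP.swap
        (hS.mono subset_rfl hsub hS.neA hbne).swap le_rfl
        (dense_half n k₀ D hD hP.hn _ B B1 (by rwa [Finset.union_comm]) hsub hb)
        (by rwa [Finset.union_comm])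
    rw [wt_swap, wt_swap D B2] at hw2
    rw [Finset.union_comm] at hdB2 hdA2
    have hw1 : wt D A B IA IB ≤ 2 * wt D A B1 IA IB := by
      have hb' : (B.card : ℝ) ≤ 2 * B1.card := by exact_mod_cast hb
      unfold wt
      calc (A.card : ℝ) * B.card * (8 / D) ^ (IA.card + IB.card)
          ≤ A.card * (2 * B1.card) * (8 / D) ^ (IA.card + IB.card) := by gcongr
        _ = _ := by ring
    have key : ∃ q : Protocol (N → Λ) (N → Λ) Out, q.depth + 1 ≤ (Protocol.nodeB h p0 p1).depth ∧
        (∀ x y, h y = b → (Protocol.nodeB h p0 p1).run x y = q.run x y) ∧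
        ∃ A' B' IA' IB' ρ' o, A' ⊆ A2 ∧ B' ⊆ B2 ∧ St H gd F0 A' B' IA' IB' ρ' ∧
      DenseOn D (F0 \ (IA' ∪ IB')) A' ∧ DenseOn D (F0 \ (IA' ∪ IB')) B' ∧
      wt D A2 B2 IA2 IB2 ≤ 4 ^ q.depth * wt D A' B' IA' IB' ∧
      ∀ x ∈ A', ∀ y ∈ B', q.run x y = o := by
      cases b with
      | true => exact ⟨p1, by simp [Protocol.depth], fun x y hx => by simp [Protocol.run, hx],
          ih1 A2 B2 IA2 IB2 ρ2 hS2.swap hdA2 hdB2⟩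
      | false => exact ⟨p0, by simp [Protocol.depth], fun x y hx => by simp [Protocol.run, hx],
          ih0 A2 B2 IA2 IB2 ρ2 hS2.swap hdA2 hdB2⟩
    obtain ⟨q, hq, hrun, A', B', IA', IB', ρ', o, hA', hB', hS', hdA', hdB', hw', ho⟩ := key
    refine ⟨A', B', IA', IB', ρ', o, hA'.trans hA2, hB'.trans (hB2.trans hsub), hS', hdA', hdB', ?_, ?_⟩
    · calc wt D A B IA IB ≤ 2 * (2 * (4 ^ q.depth * wt D A' B' IA' IB')) := by linarith
        _ = 4 ^ (q.depth + 1) * wt D A' B' IA' IB' := by ring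
        _ ≤ _ := mul_le_mul_of_nonneg_right (pow_le_pow_right₀ (by norm_num) hq) (wt_nonneg D hD _ _ _ _)
    · intro x hx y hy
      rw [hrun x y (Finset.mem_filter.1 (hB2 (hB' hy))).2]
      exact ho x hx y hy

end Sim
end


open Classical

set_option linter.unusedSectionVars false

noncomputable section

/-! ### The query adversary and the lifting count -/

section Adv
variable {m ℓ : ℕ} {O : Type}

def HardQ (m : ℕ) (S : (Fin ℓ → Bool) → O → Prop) (Q : Finset (Fin m × Fin ℓ))
    (ρ : Fin m × Fin ℓ → Bool) : Prop :=
  ∀ (i : Fin m) (T : DTree (Fin ℓ) O),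
    T.depth + (Q.filter (fun e => e.1 = i)).card < Qcomplexity S →
    ∃ z : Fin ℓ → Bool, (∀ j, (i, j) ∈ Q → z j = ρ (i, j)) ∧ ¬ S z (T.run z)

lemma hardQ_empty (S : (Fin ℓ → Bool) → O → Prop) (ρ : Fin m × Fin ℓ → Bool) :
    HardQ m S ∅ ρ := by
  intro i T hT
  by_contra h
  push Not at h
  have hs : DSolves T S := fun z => h z (by simp)
  have : Qcomplexity S ≤ T.depth := Nat.sInf_le ⟨T, hs, rfl⟩
  omega

lemma hardQ_insert (S : (Fin ℓ → Bool) → O → Prop) (Q : Finset (Fin m × Fin ℓ))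
    (ρ : Fin m × Fin ℓ → Bool) (h : HardQ m S Q ρ) (e : Fin m × Fin ℓ) (he : e ∉ Q) :
    ∃ b, HardQ m S (insert e Q) (Function.update ρ e b) := by
  by_contra hcon
  push Not at hcon
  have key : ∀ b, ∃ T : DTree (Fin ℓ) O,
      T.depth + (Q.filter (fun e' => e'.1 = e.1)).card + 1 < Qcomplexity S ∧
      ∀ z : Fin ℓ → Bool, (∀ j, (e.1, j) ∈ Q → z j = ρ (e.1, j)) → z e.2 = b → S z (T.run z) := by
    intro b
    have hb := hcon b
    unfold HardQ at hb
    push Not at hb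
    obtain ⟨i, T, hT, hz⟩ := hb
    by_cases hi : i = e.1
    · subst hi
      refine ⟨T, ?_, ?_⟩
      · rw [Finset.filter_insert, if_pos rfl, Finset.card_insert_of_notMem
          (by simp [he])] at hT
        omega
      · intro z h1 h2
        refine hz z fun j hj => ?_
        by_cases hje : (e.1, j) = e
        · rw [hje, Function.update_self, ← h2]
          rw [← hje]
        · rw [Function.update_of_ne hje]
          exact h1 j ((Finset.mem_insert.1 hj).resolve_left hje)
    · exfalso
      rw [Finset.filter_insert, if_neg (fun h' => hi h'.symm)] at hT
      obtain ⟨z, hz1, hz2⟩ := h i T hT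
      refine hz2 (hz z fun j hj => ?_)
      have hne : (i, j) ≠ e := fun h' => hi (by rw [← h'])
      rw [Function.update_of_ne hne]
      exact hz1 j ((Finset.mem_insert.1 hj).resolve_left hne)
  obtain ⟨T0, hd0, h0⟩ := key false
  obtain ⟨T1, hd1, h1⟩ := key true
  obtain ⟨z, hz1, hz2⟩ := h e.1 (DTree.node e.2 T0 T1) (by
    simp only [DTree.depth]
    omega)
  apply hz2
  simp only [DTree.run]
  cases hb : z e.2 with
  | true => simpa using h1 z hz1 hb
  | false => simpa using h0 z hz1 hb

lemma hardQ_union (S : (Fin ℓ → Bool) → O → Prop) (Q I : Finset (Fin m × Fin ℓ))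
    (ρ : Fin m × Fin ℓ → Bool) (h : HardQ m S Q ρ) :
    ∃ ρ', (∀ e ∈ Q, ρ' e = ρ e) ∧ HardQ m S (Q ∪ I) ρ' := by
  induction I using Finset.induction_on with
  | empty => exact ⟨ρ, fun _ _ => rfl, by simpa using h⟩
  | insert e I _ ih =>
    obtain ⟨ρ', h1, h2⟩ := ih
    rw [Finset.union_insert]
    by_cases he : e ∈ Q ∪ I
    · exact ⟨ρ', h1, by rwa [Finset.insert_eq_self.2 he]⟩
    · obtain ⟨b, hb⟩ := hardQ_insert S _ ρ' h2 e he
      refine ⟨_, fun e' he' => ?_, hb⟩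
      rw [Function.update_of_ne, h1 e' he']
      rintro rfl
      exact he (Finset.mem_union_left _ he')

lemma lift_count {Λ : Type} [Fintype Λ] (S : (Fin ℓ → Bool) → O → Prop) (gd : Λ → Λ → Bool)
    (c : ℝ) (n k₀ : ℕ) (D τ δ : ℝ) (hP : Par gd c (Fin m × Fin ℓ) n k₀ D τ)
    (R : Finset (Fin m)) (V : Finset (Fin m × Fin ℓ → Λ)) (hV : V.Nonempty) (hδ : 0 ≤ δ) (hδD : δ ≤ D)
    (hd : DenseOn δ (Finset.univ.filter (fun e : Fin m × Fin ℓ => e.1 ∉ R)) V)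
    (p : Protocol (Fin m × Fin ℓ → Λ) (Fin m × Fin ℓ → Λ) (Fin m × O))
    (hp : ∀ x ∈ V, ∀ y ∈ V, (p.run x y).1 ∉ R ∧
      S (fun j => gd (x ((p.run x y).1, j)) (y ((p.run x y).1, j))) (p.run x y).2) :
    ∃ q : ℕ, Qcomplexity S ≤ q ∧ 1 ≤ (8 * δ / D) ^ q * 4 ^ p.depth := by
  set F0 := Finset.univ.filter (fun e : Fin m × Fin ℓ => e.1 ∉ R) with hF0
  have hD := hP.hD
  have hVD : DenseOn D F0 V := fun J hJ y => (hd J hJ y).trans (by gcongr)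
  have hS0 : St (HardQ m S) gd F0 V V ∅ ∅ (fun _ => false) := by
    refine ⟨hV, hV, by simp, by simp, by simp, by simp, by simp, by simp, ?_⟩
    exact hardQ_empty S _
  obtain ⟨A, B, IA, IB, ρ, o, hAV, hBV, hS, hdA, hdB, hw, ho⟩ :=
    simulate (HardQ m S) (hardQ_union S) c n k₀ D τ F0 gd hP p V V ∅ ∅ _ hS0
      (by simpa using hVD) (by simpa using hVD)
  refine ⟨IA.card + IB.card, ?_, ?_⟩
  · by_contra hlt
    push Not at hlt
    set F := F0 \ (IA ∪ IB) with hF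
    -- some good x
    have hApos : (0 : ℝ) < A.card := by exact_mod_cast hS.neA.card_pos
    have hbad := bad_le_half gd c hP.hc hP.h1 A B F n k₀ D (3 * (4 * n) ^ k₀) τ hD (by positivity)
      hP.hn hP.hnN hP.hk₀ hP.hτ hP.hτL hP.hnum
      (dense_half n k₀ D hD hP.hn F A A hdA subset_rfl (by omega)) hdB hS.neB
    have hex : ∃ x ∈ A, Good gd n k₀ D F B x := by
      by_contra hno
      push Not at hno
      rw [Finset.filter_true_of_mem hno] at hbad
      linarith
    obtain ⟨x, hxA, hxg⟩ := hex
    obtain ⟨y₀, hy₀⟩ := hS.neB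
    have hout := hp x (hAV hxA) y₀ (hBV hy₀)
    rw [ho x hxA y₀ hy₀] at hout
    have hiR := hout.1
    have hle : ((IA ∪ IB).filter (fun e => e.1 = o.1)).card ≤ IA.card + IB.card :=
      (Finset.card_filter_le _ _).trans (Finset.card_union_le _ _)
    obtain ⟨z, hz1, hz2⟩ := hS.hard o.1 (DTree.leaf o.2) (by simp only [DTree.depth]; omega)
    have hlow := good_lower gd B F n k₀ D hP.hn hP.hnN x hxg
      (F.filter (fun e => e.1 = o.1)) (Finset.filter_subset _ _) (fun e => z e.2)
    have hBpos : (0 : ℝ) < B.card := by exact_mod_cast hS.neB.card_pos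
    have hne : (cons gd B (F.filter (fun e => e.1 = o.1)) x (fun e => z e.2)).Nonempty := by
      rw [← Finset.card_pos]
      by_contra h0
      have h0 : (cons gd B (F.filter (fun e => e.1 = o.1)) x (fun e => z e.2)).card = 0 := by omega
      rw [h0] at hlow
      simp at hlow
      simp [hlow] at hBpos
    obtain ⟨y, hy⟩ := hne
    obtain ⟨hyB, hyv⟩ := Finset.mem_filter.1 hy
    have hv := (hp x (hAV hxA) y (hBV hyB)).2
    rw [ho x hxA y hyB] at hv
    apply hz2
    simp only [DTree.run]
    convert hv using 2
    rename_i j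
    by_cases hj : (o.1, j) ∈ IA ∪ IB
    · rw [hz1 j hj, hS.val x hxA y hyB _ hj]
    · have hjF : (o.1, j) ∈ F.filter (fun e => e.1 = o.1) := by
        simp only [hF, hF0, Finset.mem_filter, Finset.mem_sdiff, Finset.mem_univ, true_and]
        exact ⟨⟨hiR, hj⟩, trivial⟩
      exact (hyv _ hjF).symm
  · obtain ⟨x, hx⟩ := hS.neA
    obtain ⟨y, hy⟩ := hS.neB
    have hA : (A.card : ℝ) ≤ δ ^ IA.card * V.card := by
      refine le_trans ?_ (hd IA hS.subA x)
      exact_mod_cast Finset.card_le_card fun a ha =>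
        Finset.mem_filter.2 ⟨hAV ha, fun e he => hS.cA a ha x hx e he⟩
    have hB : (B.card : ℝ) ≤ δ ^ IB.card * V.card := by
      refine le_trans ?_ (hd IB hS.subB y)
      exact_mod_cast Finset.card_le_card fun a ha =>
        Finset.mem_filter.2 ⟨hBV ha, fun e he => hS.cB a ha y hy e he⟩
    have hVpos : (0 : ℝ) < V.card := by exact_mod_cast hV.card_pos
    have hfin : (V.card : ℝ) * V.card * 1 ≤ V.card * V.card *
        ((8 * δ / D) ^ (IA.card + IB.card) * 4 ^ p.depth) := by
      have hw0 : wt D V V ∅ ∅ = (V.card : ℝ) * V.card * 1 := by simp [wt]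
      rw [← hw0]
      refine hw.trans ?_
      unfold wt
      calc (4 : ℝ) ^ p.depth * (A.card * B.card * (8 / D) ^ (IA.card + IB.card))
          ≤ 4 ^ p.depth * ((δ ^ IA.card * V.card) * (δ ^ IB.card * V.card) *
            (8 / D) ^ (IA.card + IB.card)) := by gcongr
        _ = _ := by
          rw [show 8 * δ / D = δ * (8 / D) by ring, mul_pow, pow_add δ]; ring
    exact le_of_mul_le_mul_left hfin (by positivity)

end Adv
end


open Classical

set_option linter.unusedSectionVars false

noncomputable section

/-! ### Monotone formula complexity of rectangles -/

namespace Protocol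
variable {X Y X' Y' O : Type}

/-- pull a protocol back along maps of the inputs -/
def comap (f : X' → X) (g : Y' → Y) : Protocol X Y O → Protocol X' Y' O
  | leaf o => leaf o
  | nodeA h p0 p1 => nodeA (fun x => h (f x)) (comap f g p0) (comap f g p1)
  | nodeB h p0 p1 => nodeB (fun y => h (g y)) (comap f g p0) (comap f g p1)

lemma comap_run (f : X' → X) (g : Y' → Y) (p : Protocol X Y O) (x : X') (y : Y') :
    (comap f g p).run x y = p.run (f x) (g y) := by
  induction p with
  | leaf o => rfl
  | nodeA h p0 p1 ih0 ih1 => simp only [comap, run, ih0, ih1]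
  | nodeB h p0 p1 ih0 ih1 => simp only [comap, run, ih0, ih1]

lemma comap_leaves (f : X' → X) (g : Y' → Y) (p : Protocol X Y O) :
    (comap f g p).leaves = p.leaves := by
  induction p with
  | leaf o => rfl
  | nodeA h p0 p1 ih0 ih1 => simp only [comap, leaves, ih0, ih1]
  | nodeB h p0 p1 ih0 ih1 => simp only [comap, leaves, ih0, ih1]

lemma comap_depth (f : X' → X) (g : Y' → Y) (p : Protocol X Y O) :
    (comap f g p).depth = p.depth := by
  induction p with
  | leaf o => rfl
  | nodeA h p0 p1 ih0 ih1 => simp only [comap, depth, ih0, ih1]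
  | nodeB h p0 p1 ih0 ih1 => simp only [comap, depth, ih0, ih1]

/-- extend a protocol on a rectangle to all inputs -/
def extP (A : Set X) (B : Set Y) : Protocol A B O → Protocol X Y O
  | leaf o => leaf o
  | nodeA h p0 p1 => nodeA (fun x => if hx : x ∈ A then h ⟨x, hx⟩ else false) (extP A B p0) (extP A B p1)
  | nodeB h p0 p1 => nodeB (fun y => if hy : y ∈ B then h ⟨y, hy⟩ else false) (extP A B p0) (extP A B p1)

lemma extP_run (A : Set X) (B : Set Y) (p : Protocol A B O) (x : A) (y : B) :
    (extP A B p).run x y = p.run x y := by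
  induction p with
  | leaf o => rfl
  | nodeA h p0 p1 ih0 ih1 => simp [extP, run, ih0, ih1]
  | nodeB h p0 p1 ih0 ih1 => simp [extP, run, ih0, ih1]

lemma extP_leaves (A : Set X) (B : Set Y) (p : Protocol A B O) :
    (extP A B p).leaves = p.leaves := by
  induction p with
  | leaf o => rfl
  | nodeA h p0 p1 ih0 ih1 => simp only [extP, leaves, ih0, ih1]
  | nodeB h p0 p1 ih0 ih1 => simp only [extP, leaves, ih0, ih1]

end Protocol

section ML
variable {ι : Type}

/-- a total protocol which is correct on the rectangle -/
def Corr (A B : Set (ι → Bool)) (p : Protocol (ι → Bool) (ι → Bool) ι) : Prop :=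
  ∀ a ∈ A, ∀ b ∈ B, a (p.run a b) = true ∧ b (p.run a b) = false

lemma mL_le {A B : Set (ι → Bool)} {p : Protocol (ι → Bool) (ι → Bool) ι} (h : Corr A B p) :
    mL A B ≤ p.leaves := by
  refine Nat.sInf_le ⟨p.comap Subtype.val Subtype.val, ?_, Protocol.comap_leaves _ _ _⟩
  intro x y
  simp only [mKWrect, Protocol.comap_run]
  exact h x x.2 y y.2

lemma mL_spec {A B : Set (ι → Bool)} {p : Protocol (ι → Bool) (ι → Bool) ι} (h : Corr A B p) :
    ∃ q, Corr A B q ∧ q.leaves = mL A B := by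
  have hne : {k | ∃ p : Protocol A B ι, Solves p (mKWrect A B) ∧ p.leaves = k}.Nonempty := by
    refine ⟨_, p.comap Subtype.val Subtype.val, ?_, rfl⟩
    intro x y
    simp only [mKWrect, Protocol.comap_run]
    exact h x x.2 y y.2
  obtain ⟨q, hq, hl⟩ := Nat.sInf_mem hne
  refine ⟨q.extP A B, ?_, ?_⟩
  · intro a ha b hb
    have h1 := Protocol.extP_run A B q ⟨a, ha⟩ ⟨b, hb⟩
    have h2 := hq ⟨a, ha⟩ ⟨b, hb⟩
    simp only at h1
    rw [h1]
    exact h2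
  · rw [Protocol.extP_leaves, hl]; rfl

/-- combine protocols for the two subrectangles determined by the `i`-th coordinate -/
lemma corr_split {A B : Set (ι → Bool)} (i : ι) {p0 p1 : Protocol (ι → Bool) (ι → Bool) ι}
    (h0 : Corr {a ∈ A | a i = false} B p0) (h1 : Corr A {b ∈ B | b i = true} p1) :
    Corr A B (Protocol.nodeA (fun a => a i) p0
      (Protocol.nodeB (fun b => b i) (Protocol.leaf i) p1)) := by
  intro a ha b hb
  cases hai : a i with
  | false =>
    simp only [Protocol.run, hai, Bool.false_eq_true, if_false]
    exact h0 a ⟨ha, hai⟩ b hb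
  | true =>
    cases hbi : b i with
    | false => simp [Protocol.run, hai, hbi]
    | true =>
      simp only [Protocol.run, hai, hbi, if_true]
      exact h1 a ha b ⟨hb, hbi⟩

lemma exists_corr [Nonempty ι] (T : Finset ι) : ∀ (A B : Set (ι → Bool)),
    (∀ a ∈ A, ∀ b ∈ B, ∃ i ∈ T, a i = true ∧ b i = false) →
    ∃ p, Corr A B p ∧ p.leaves + 1 ≤ 2 ^ (T.card + 1) := by
  induction T using Finset.induction_on with
  | empty =>
    intro A B h
    refine ⟨Protocol.leaf (Classical.arbitrary ι), ?_, by simp [Protocol.leaves]⟩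
    intro a ha b hb
    obtain ⟨i, hi, _⟩ := h a ha b hb
    simp at hi
  | insert i T hi ih =>
    intro A B h
    obtain ⟨p0, h0, l0⟩ := ih {a ∈ A | a i = false} B (by
      rintro a ⟨ha, hai⟩ b hb
      obtain ⟨j, hj, h1, h2⟩ := h a ha b hb
      refine ⟨j, (Finset.mem_insert.1 hj).resolve_left ?_, h1, h2⟩
      rintro rfl
      simp [hai] at h1)
    obtain ⟨p1, h1, l1⟩ := ih A {b ∈ B | b i = true} (by
      rintro a ha b ⟨hb, hbi⟩
      obtain ⟨j, hj, h1, h2⟩ := h a ha b hb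
      refine ⟨j, (Finset.mem_insert.1 hj).resolve_left ?_, h1, h2⟩
      rintro rfl
      simp [hbi] at h2)
    refine ⟨_, corr_split i h0 h1, ?_⟩
    rw [Finset.card_insert_of_notMem hi, pow_succ]
    simp only [Protocol.leaves]
    omega

lemma mL_split [Nonempty ι] [Fintype ι] {A B : Set (ι → Bool)} (i : ι)
    (h : ∀ a ∈ A, ∀ b ∈ B, ∃ i, a i = true ∧ b i = false) :
    mL A B + 1 ≤ (mL {a ∈ A | a i = false} B + 1) + (mL A {b ∈ B | b i = true} + 1) := by
  obtain ⟨p, hp, _⟩ := exists_corr Finset.univ A B (by simpa using h)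
  obtain ⟨p0, h0, l0⟩ := mL_spec (A := {a ∈ A | a i = false}) (B := B) (p := p)
    (fun a ha b hb => hp a ha.1 b hb)
  obtain ⟨p1, h1, l1⟩ := mL_spec (A := A) (B := {b ∈ B | b i = true}) (p := p)
    (fun a ha b hb => hp a ha b hb.1)
  have := mL_le (corr_split i h0 h1)
  simp only [Protocol.leaves] at this
  omega

lemma mL_upper [Nonempty ι] [Fintype ι] {A B : Set (ι → Bool)}
    (h : ∀ a ∈ A, ∀ b ∈ B, ∃ i, a i = true ∧ b i = false) :
    mL A B + 1 ≤ 2 ^ (Fintype.card ι + 1) := by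
  obtain ⟨p, hp, hl⟩ := exists_corr Finset.univ A B (by simpa using h)
  have := mL_le hp
  rw [Finset.card_univ] at hl
  omega

lemma mL_nonempty [Nonempty ι] {A B : Set (ι → Bool)} (h : 2 ≤ mL A B) :
    A.Nonempty ∧ B.Nonempty := by
  by_contra hcon
  have : Corr A B (Protocol.leaf (Classical.arbitrary ι)) := by
    intro a ha b hb
    exact absurd ⟨⟨a, ha⟩, ⟨b, hb⟩⟩ hcon
  have := mL_le this
  simp only [Protocol.leaves] at this
  omega

end ML
end


open Classical

set_option linter.unusedSectionVars false

noncomputable section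

/-! ### Extracting a hard collection -/

section HardColl
variable {m ℓ : ℕ} {Λ : Type} [Fintype Λ]

def SepRect {ι : Type} (A B : Set (ι → Bool)) : Prop :=
  ∀ a ∈ A, ∀ b ∈ B, ∃ i, a i = true ∧ b i = false

lemma reveal {Ω : Type} [Nonempty (Fin m)] (k r : ℕ) (T : Finset (Fin m)) :
    ∀ (V : Finset Ω) (𝒜 ℬ : Ω → Set (Fin m → Bool)),
    (∀ W, SepRect (𝒜 W) (ℬ W)) → (∀ W ∈ V, 2 ^ k ≤ (mL (𝒜 W) (ℬ W) + 1) * 2 ^ r) →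
    ∃ (V' : Finset Ω) (𝒜' ℬ' : Ω → Set (Fin m → Bool)), V' ⊆ V ∧
      (∀ W, 𝒜' W ⊆ 𝒜 W) ∧ (∀ W, ℬ' W ⊆ ℬ W) ∧ V.card ≤ 2 ^ T.card * V'.card ∧
      (∀ W ∈ V', 2 ^ k ≤ (mL (𝒜' W) (ℬ' W) + 1) * 2 ^ (r + T.card)) ∧
      ∀ i ∈ T, (∀ W ∈ V', ∀ a ∈ 𝒜' W, a i = false) ∨ (∀ W ∈ V', ∀ b ∈ ℬ' W, b i = true) := by
  induction T using Finset.induction_on with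
  | empty =>
    intro V 𝒜 ℬ _ h
    exact ⟨V, 𝒜, ℬ, subset_rfl, fun _ => subset_rfl, fun _ => subset_rfl, by simp,
      by simpa using h, by simp⟩
  | insert i T hi ih =>
    intro V 𝒜 ℬ hsep h
    obtain ⟨V1, 𝒜1, ℬ1, hV1, hA1, hB1, hc1, hm1, hd1⟩ := ih V 𝒜 ℬ hsep h
    have hsep1 : ∀ W, SepRect (𝒜1 W) (ℬ1 W) := fun W a ha b hb => hsep W a (hA1 W ha) b (hB1 W hb)
    rw [Finset.card_insert_of_notMem hi]
    let P0 : Ω → Prop := fun W =>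
      2 ^ k ≤ (mL {a ∈ 𝒜1 W | a i = false} (ℬ1 W) + 1) * 2 ^ (r + (T.card + 1))
    have hsplit := Finset.card_filter_add_card_filter_not (s := V1) P0
    by_cases hbig : V1.card ≤ 2 * (V1.filter P0).card
    · refine ⟨V1.filter P0, fun W => {a ∈ 𝒜1 W | a i = false}, ℬ1,
        (Finset.filter_subset _ _).trans hV1, fun W a ha => hA1 W ha.1, hB1, ?_, ?_, ?_⟩
      · calc V.card ≤ 2 ^ T.card * V1.card := hc1
          _ ≤ 2 ^ T.card * (2 * (V1.filter P0).card) := by gcongr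
          _ = _ := by ring
      · intro W hW
        exact (Finset.mem_filter.1 hW).2
      · intro j hj
        rcases Finset.mem_insert.1 hj with rfl | hj
        · exact Or.inl fun W _ a ha => ha.2
        · rcases hd1 j hj with h' | h'
          · exact Or.inl fun W hW a ha => h' W (Finset.mem_of_mem_filter W hW) a ha.1
          · exact Or.inr fun W hW b hb => h' W (Finset.mem_of_mem_filter W hW) b hb
    · refine ⟨V1.filter (fun W => ¬ P0 W), 𝒜1, fun W => {b ∈ ℬ1 W | b i = true},
        (Finset.filter_subset _ _).trans hV1, hA1, fun W b hb => hB1 W hb.1, ?_, ?_, ?_⟩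
      · have : V1.card ≤ 2 * (V1.filter (fun W => ¬ P0 W)).card := by omega
        calc V.card ≤ 2 ^ T.card * V1.card := hc1
          _ ≤ 2 ^ T.card * (2 * (V1.filter (fun W => ¬ P0 W)).card) := by gcongr
          _ = _ := by ring
      · intro W hW
        obtain ⟨hW1, hW2⟩ := Finset.mem_filter.1 hW
        have h1 := hm1 W hW1
        have h2 := mL_split i (hsep1 W)
        have h3 : ¬ (2 ^ k ≤ (mL {a ∈ 𝒜1 W | a i = false} (ℬ1 W) + 1) * 2 ^ (r + (T.card + 1))) := hW2
        rw [← add_assoc, pow_succ] at h3 ⊢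
        by_contra h4
        push Not at h3 h4
        generalize 2 ^ (r + T.card) = u at *
        nlinarith
      · intro j hj
        rcases Finset.mem_insert.1 hj with rfl | hj
        · exact Or.inr fun W _ a ha => ha.2
        · rcases hd1 j hj with h' | h'
          · exact Or.inl fun W hW a ha => h' W (Finset.mem_of_mem_filter W hW) a ha
          · exact Or.inr fun W hW b hb => h' W (Finset.mem_of_mem_filter W hW) b hb.1

lemma card_const {N : Type} [Fintype N] (V : Finset (N → Λ)) (I : Finset N)
    (h : ∀ W ∈ V, ∀ W' ∈ V, ∀ e ∈ I, W e = W' e) :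
    V.card * Fintype.card Λ ^ I.card ≤ Fintype.card Λ ^ Fintype.card N := by
  let g : (N → Λ) × (I → Λ) → (N → Λ) := fun q e => if he : e ∈ I then q.2 ⟨e, he⟩ else q.1 e
  have h1 : (V ×ˢ (Finset.univ : Finset (I → Λ))).card ≤ (Finset.univ : Finset (N → Λ)).card := by
    refine Finset.card_le_card_of_injOn g (fun _ _ => Finset.mem_coe.2 (Finset.mem_univ _)) ?_
    rintro ⟨W, y⟩ hW ⟨W', y'⟩ hW' heq
    have hWV : W ∈ V := (Finset.mem_product.1 (Finset.mem_coe.1 hW)).1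
    have hWV' : W' ∈ V := (Finset.mem_product.1 (Finset.mem_coe.1 hW')).1
    have hy : y = y' := by
      funext e
      have := congrFun heq e.1
      simpa [g] using this
    have hx : W = W' := by
      funext e
      by_cases he : e ∈ I
      · exact h W hWV W' hWV' e he
      · have := congrFun heq e
        simpa [g, he] using this
    rw [hx, hy]
  rw [Finset.card_product, Finset.card_univ, Finset.card_univ] at h1
  simpa using h1

/-- state of the revealing process -/
def RState (𝒜0 ℬ0 : (Fin m × Fin ℓ → Λ) → Set (Fin m → Bool)) (k : ℕ) (R : Finset (Fin m))
    (V : Finset (Fin m × Fin ℓ → Λ)) (𝒜 ℬ : (Fin m × Fin ℓ → Λ) → Set (Fin m → Bool))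
    (I : Finset (Fin m × Fin ℓ)) : Prop :=
  (∀ W, 𝒜 W ⊆ 𝒜0 W) ∧ (∀ W, ℬ W ⊆ ℬ0 W) ∧
  (∀ W ∈ V, 2 ^ k ≤ (mL (𝒜 W) (ℬ W) + 1) * 2 ^ R.card) ∧
  (∀ i ∈ R, (∀ W ∈ V, ∀ a ∈ 𝒜 W, a i = false) ∨ (∀ W ∈ V, ∀ b ∈ ℬ W, b i = true)) ∧
  (∀ e ∈ I, e.1 ∈ R) ∧ (∀ W ∈ V, ∀ W' ∈ V, ∀ e ∈ I, W e = W' e) ∧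
  2 * Fintype.card Λ ^ (Fintype.card (Fin m × Fin ℓ)) * 2 ^ R.card <
    V.card * Fintype.card Λ ^ I.card * 2 ^ k

lemma rstate_step [Nonempty (Fin m)] [Nonempty Λ]
    {𝒜0 ℬ0 : (Fin m × Fin ℓ → Λ) → Set (Fin m → Bool)} {k : ℕ} {R : Finset (Fin m)}
    {V : Finset (Fin m × Fin ℓ → Λ)} {𝒜 ℬ : (Fin m × Fin ℓ → Λ) → Set (Fin m → Bool)}
    {I : Finset (Fin m × Fin ℓ)} (hsep : ∀ W, SepRect (𝒜0 W) (ℬ0 W))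
    (h : RState 𝒜0 ℬ0 k R V 𝒜 ℬ I)
    (hd : ¬ DenseOn (4 / (Fintype.card Λ : ℝ))
      (Finset.univ.filter (fun e : Fin m × Fin ℓ => e.1 ∉ R)) V) :
    ∃ R' V' 𝒜' ℬ' I', RState 𝒜0 ℬ0 k R' V' 𝒜' ℬ' I' ∧ R.card < R'.card := by
  obtain ⟨hA, hB, hm, hR, hI, hconst, hsz⟩ := h
  unfold DenseOn at hd
  push Not at hd
  obtain ⟨J, hJ, x, hlt⟩ := hd
  have hLpos : 0 < Fintype.card Λ := Fintype.card_pos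
  set L := Fintype.card Λ with hL
  have hJne : J.Nonempty := by
    rw [Finset.nonempty_iff_ne_empty]
    rintro rfl
    simp [fib_empty] at hlt
  set V1 := fib V J x with hV1
  have hV1V : V1 ⊆ V := Finset.filter_subset _ _
  have hlt' : 4 ^ J.card * V.card < V1.card * L ^ J.card := by
    have hL' : (0 : ℝ) < (L : ℝ) ^ J.card := by positivity
    rw [div_pow, div_mul_eq_mul_div, div_lt_iff₀ hL'] at hlt
    exact_mod_cast hlt
  set T := J.image Prod.fst with hT
  have hTJ : T.card ≤ J.card := Finset.card_image_le
  have hTne : 0 < T.card := (hJne.image _).card_pos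
  have hRT : Disjoint R T := by
    rw [Finset.disjoint_right]
    intro i hi
    obtain ⟨e, he, rfl⟩ := Finset.mem_image.1 hi
    exact (Finset.mem_filter.1 (hJ he)).2
  obtain ⟨V', 𝒜', ℬ', hV', hA', hB', hc', hm', hd'⟩ := reveal k R.card T V1 𝒜 ℬ
    (fun W a ha b hb => hsep W a (hA W ha) b (hB W hb)) (fun W hW => hm W (hV1V hW))
  have hRTc : (R ∪ T).card = R.card + T.card := Finset.card_union_of_disjoint hRT
  have hIJ : Disjoint I J := by
    rw [Finset.disjoint_left]
    intro e he heJ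
    exact (Finset.mem_filter.1 (hJ heJ)).2 (hI e he)
  refine ⟨R ∪ T, V', 𝒜', ℬ', I ∪ J, ⟨fun W => (hA' W).trans (hA W), fun W => (hB' W).trans (hB W),
    ?_, ?_, ?_, ?_, ?_⟩, ?_⟩
  · rwa [hRTc]
  · intro i hi
    rcases Finset.mem_union.1 hi with hi | hi
    · rcases hR i hi with h1 | h1
      · exact Or.inl fun W hW a ha => h1 W (hV1V (hV' hW)) a (hA' W ha)
      · exact Or.inr fun W hW a ha => h1 W (hV1V (hV' hW)) a (hB' W ha)
    · exact hd' i hi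
  · intro e he
    rcases Finset.mem_union.1 he with he | he
    · exact Finset.mem_union_left _ (hI e he)
    · exact Finset.mem_union_right _ (Finset.mem_image_of_mem _ he)
  · intro W hW W' hW' e he
    rcases Finset.mem_union.1 he with he | he
    · exact hconst W (hV1V (hV' hW)) W' (hV1V (hV' hW')) e he
    · rw [(Finset.mem_filter.1 (hV' hW)).2 e he, (Finset.mem_filter.1 (hV' hW')).2 e he]
  · rw [hRTc, Finset.card_union_of_disjoint hIJ]
    refine lt_of_mul_lt_mul_left (a := 2 ^ T.card) ?_ (Nat.zero_le _)
    set NN := L ^ (Fintype.card (Fin m × Fin ℓ)) with hNN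
    have h4 : 2 ^ T.card * 2 ^ T.card ≤ 4 ^ J.card := by
      rw [← mul_pow]
      exact Nat.pow_le_pow_right (by norm_num) hTJ
    calc 2 ^ T.card * (2 * NN * 2 ^ (R.card + T.card))
        = (2 ^ T.card * 2 ^ T.card) * (2 * NN * 2 ^ R.card) := by ring
      _ ≤ 4 ^ J.card * (2 * NN * 2 ^ R.card) := Nat.mul_le_mul_right _ h4
      _ < 4 ^ J.card * (V.card * L ^ I.card * 2 ^ k) := by
          exact Nat.mul_lt_mul_of_pos_left hsz (by positivity)
      _ = (4 ^ J.card * V.card) * (L ^ I.card * 2 ^ k) := by ring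
      _ ≤ (V1.card * L ^ J.card) * (L ^ I.card * 2 ^ k) := Nat.mul_le_mul_right _ hlt'.le
      _ ≤ ((2 ^ T.card * V'.card) * L ^ J.card) * (L ^ I.card * 2 ^ k) :=
          Nat.mul_le_mul_right _ (Nat.mul_le_mul_right _ hc')
      _ = _ := by ring
  · omega

lemma hard_collection [Nonempty (Fin m)] [Nonempty Λ]
    (𝒜0 ℬ0 : (Fin m × Fin ℓ → Λ) → Set (Fin m → Bool)) (hsep : ∀ W, SepRect (𝒜0 W) (ℬ0 W))
    (hγ : 4 * m ^ 2 * Fintype.card (Fin m × Fin ℓ → Λ) ≤ ∑ W, mL (𝒜0 W) (ℬ0 W)) :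
    2 ≤ m ∧ ∃ (R : Finset (Fin m)) (V : Finset (Fin m × Fin ℓ → Λ))
      (aW bW : (Fin m × Fin ℓ → Λ) → (Fin m → Bool)), V.Nonempty ∧
      (∀ W ∈ V, aW W ∈ 𝒜0 W) ∧ (∀ W ∈ V, bW W ∈ ℬ0 W) ∧
      (∀ W ∈ V, ∀ W' ∈ V, ∀ i ∈ R, ¬ (aW W i = true ∧ bW W' i = false)) ∧
      DenseOn (4 / (Fintype.card Λ : ℝ))
        (Finset.univ.filter (fun e : Fin m × Fin ℓ => e.1 ∉ R)) V := by
  have hm0 : 1 ≤ m := by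
    obtain ⟨i⟩ := ‹Nonempty (Fin m)›
    have := i.2
    omega
  set Ω := Fintype.card (Fin m × Fin ℓ → Λ) with hΩ
  have hΩpos : 0 < Ω := Fintype.card_pos
  have hup : ∀ W, mL (𝒜0 W) (ℬ0 W) + 1 ≤ 2 ^ (m + 1) := by
    intro W
    simpa using mL_upper (hsep W)
  have hm2 : 2 ≤ m := by
    by_contra hlt
    have hm1 : m = 1 := by omega
    have h3 : ∀ W, mL (𝒜0 W) (ℬ0 W) ≤ 3 := by
      intro W
      have := hup W
      have h22 : 2 ^ (m + 1) = 4 := by rw [hm1]; norm_num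
      omega
    have h4 : ∑ W, mL (𝒜0 W) (ℬ0 W) ≤ ∑ _W : (Fin m × Fin ℓ → Λ), 3 :=
      Finset.sum_le_sum fun W _ => h3 W
    rw [Finset.sum_const, smul_eq_mul, Finset.card_univ, ← hΩ] at h4
    have : 4 * m ^ 2 * Ω = 4 * Ω := by rw [hm1]; ring
    omega
  refine ⟨hm2, ?_⟩
  -- bucketing
  let Vk : ℕ → Finset (Fin m × Fin ℓ → Λ) := fun k =>
    Finset.univ.filter (fun W => Nat.log 2 (mL (𝒜0 W) (ℬ0 W) + 1) = k)
  have hbucket : ∃ k, 2 * Ω < (Vk k).card * 2 ^ k := by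
    by_contra hno
    push Not at hno
    have h1 : ∑ W, (mL (𝒜0 W) (ℬ0 W) + 1) ≤ ∑ k ∈ Finset.range (m + 2), ∑ W ∈ Vk k, 2 ^ (k + 1) := by
      rw [← Finset.sum_fiberwise_of_maps_to (s := Finset.univ) (t := Finset.range (m + 2))
        (g := fun W => Nat.log 2 (mL (𝒜0 W) (ℬ0 W) + 1))]
      · refine Finset.sum_le_sum fun k _ => Finset.sum_le_sum fun W hW => ?_
        have hk := (Finset.mem_filter.1 hW).2
        rw [← hk]
        exact (Nat.lt_pow_succ_log_self (by norm_num) _).le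
      · intro W _
        rw [Finset.mem_range]
        refine Nat.log_lt_of_lt_pow (by omega) ?_
        refine lt_of_le_of_lt (hup W) ?_
        exact Nat.pow_lt_pow_right (by norm_num) (by omega)
    have h2 : ∑ k ∈ Finset.range (m + 2), ∑ W ∈ Vk k, 2 ^ (k + 1) ≤
        ∑ k ∈ Finset.range (m + 2), 4 * Ω := by
      refine Finset.sum_le_sum fun k _ => ?_
      rw [Finset.sum_const, smul_eq_mul, pow_succ]
      have := hno k
      linarith
    rw [Finset.sum_const, smul_eq_mul, Finset.card_range] at h2
    rw [Finset.sum_add_distrib] at h1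
    have hone : ∑ _W : (Fin m × Fin ℓ → Λ), 1 = Ω := by
      rw [Finset.sum_const, smul_eq_mul, mul_one, Finset.card_univ]
    rw [hone] at h1
    have h3 : 4 * m ^ 2 * Ω + Ω ≤ (m + 2) * (4 * Ω) := by omega
    have h4 : (4 * m ^ 2 + 1) * Ω ≤ (4 * m + 8) * Ω := by linarith
    have h5 := Nat.le_of_mul_le_mul_right h4 hΩpos
    nlinarith
  obtain ⟨k, hk⟩ := hbucket
  have hstart : RState 𝒜0 ℬ0 k ∅ (Vk k) 𝒜0 ℬ0 ∅ := by
    refine ⟨fun _ => subset_rfl, fun _ => subset_rfl, ?_, by simp, by simp, by simp, ?_⟩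
    · intro W hW
      have hW' := (Finset.mem_filter.1 hW).2
      rw [Finset.card_empty, pow_zero, mul_one, ← hW']
      exact Nat.pow_log_le_self 2 (by omega)
    · rw [Finset.card_empty, Finset.card_empty, pow_zero, pow_zero, mul_one, mul_one]
      rwa [← Fintype.card_fun]
  -- maximal R
  let Pr : ℕ → Prop := fun r => ∃ R V 𝒜 ℬ I, RState 𝒜0 ℬ0 k R V 𝒜 ℬ I ∧ R.card = r
  have hP0 : Pr 0 := ⟨∅, _, _, _, _, hstart, rfl⟩
  obtain ⟨R, V, 𝒜, ℬ, I, hst, hr⟩ : Pr (Nat.findGreatest Pr m) :=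
    Nat.findGreatest_spec (Nat.zero_le m) hP0
  have hdense : DenseOn (4 / (Fintype.card Λ : ℝ))
        (Finset.univ.filter (fun e : Fin m × Fin ℓ => e.1 ∉ R)) V := by
    by_contra hd
    obtain ⟨R', V', 𝒜', ℬ', I', hst', hlt⟩ := rstate_step hsep hst hd
    have hle : R'.card ≤ m := by simpa using Finset.card_le_univ R'
    have := Nat.le_findGreatest (P := Pr) hle ⟨R', _, _, _, _, hst', rfl⟩
    omega
  obtain ⟨hA, hB, hmL, hR, hI, hconst, hsz⟩ := hst
  have hVc := card_const V I hconst
  have hVne : V.Nonempty := by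
    rw [← Finset.card_pos]
    by_contra h0
    have h0 : V.card = 0 := by omega
    rw [h0] at hsz
    simp at hsz
  have h2k : 2 * 2 ^ R.card < 2 ^ k := by
    have hpos : 0 < Fintype.card Λ ^ (Fintype.card (Fin m × Fin ℓ)) := by
      rw [← Fintype.card_fun]; exact hΩpos
    refine lt_of_mul_lt_mul_left (a := Fintype.card Λ ^ (Fintype.card (Fin m × Fin ℓ))) ?_ (Nat.zero_le _)
    calc _ = 2 * Fintype.card Λ ^ (Fintype.card (Fin m × Fin ℓ)) * 2 ^ R.card := by ring
      _ < _ := hsz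
      _ ≤ _ := Nat.mul_le_mul_right _ hVc
  have hne : ∀ W ∈ V, (𝒜 W).Nonempty ∧ (ℬ W).Nonempty := by
    intro W hW
    apply mL_nonempty
    have := lt_of_lt_of_le h2k (hmL W hW)
    have := lt_of_mul_lt_mul_right this (Nat.zero_le _)
    omega
  have hchoose : ∀ W, ∃ a b : Fin m → Bool, W ∈ V → a ∈ 𝒜 W ∧ b ∈ ℬ W := by
    intro W
    by_cases hW : W ∈ V
    · obtain ⟨⟨a, ha⟩, ⟨b, hb⟩⟩ := hne W hW
      exact ⟨a, b, fun _ => ⟨ha, hb⟩⟩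
    · exact ⟨fun _ => false, fun _ => false, fun h => absurd h hW⟩
  choose aW bW hab using hchoose
  refine ⟨R, V, aW, bW, hVne, fun W hW => hA W (hab W hW).1, fun W hW => hB W (hab W hW).2, ?_, hdense⟩
  rintro W hW W' hW' i hi ⟨h1, h2⟩
  rcases hR i hi with h | h
  · rw [h W hW _ (hab W hW).1] at h1
    exact absurd h1 (by simp)
  · rw [h W' hW' _ (hab W' hW').2] at h2
    exact absurd h2 (by simp)

end HardColl
end


open Classical

set_option linter.unusedSectionVars false

noncomputable section

/-! ### Parameters and assembly -/

namespace Protocol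
variable {X Y O : Type}

lemma run_subtree (p : Protocol X Y O) : ∀ (π : List Bool) (q : Protocol X Y O),
    subtree p π = some q → ∀ x y, followsA p π x → followsB p π y → p.run x y = q.run x y := by
  induction p with
  | leaf o =>
    intro π q h x y _ _
    cases π with
    | nil => simp only [subtree, Option.some.injEq] at h; rw [h]
    | cons b r => simp [subtree] at h
  | nodeA h p0 p1 ih0 ih1 =>
    intro π q hq x y hx hy
    cases π with
    | nil => simp only [subtree, Option.some.injEq] at hq; rw [hq]
    | cons b r =>
      cases b with
      | true =>
        simp only [subtree, followsA, followsB, if_true] at hq hx hy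
        simp only [run, hx.1, if_true]
        exact ih1 r q hq x y hx.2 hy
      | false =>
        simp only [subtree, followsA, followsB, Bool.false_eq_true, if_false] at hq hx hy
        simp only [run, hx.1, Bool.false_eq_true, if_false]
        exact ih0 r q hq x y hx.2 hy
  | nodeB h p0 p1 ih0 ih1 =>
    intro π q hq x y hx hy
    cases π with
    | nil => simp only [subtree, Option.some.injEq] at hq; rw [hq]
    | cons b r =>
      cases b with
      | true =>
        simp only [subtree, followsA, followsB, if_true] at hq hx hy
        simp only [run, hy.1, if_true]
        exact ih1 r q hq x y hx hy.2
      | false =>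
        simp only [subtree, followsA, followsB, Bool.false_eq_true, if_false] at hq hx hy
        simp only [run, hy.1, Bool.false_eq_true, if_false]
        exact ih0 r q hq x y hx hy.2

lemma subtree_append (p : Protocol X Y O) : ∀ (π π' : List Bool) (q : Protocol X Y O),
    subtree p π = some q → subtree p (π ++ π') = subtree q π' := by
  induction p with
  | leaf o =>
    intro π π' q h
    cases π with
    | nil => simp only [subtree, Option.some.injEq] at h; rw [← h]; rfl
    | cons b r => simp [subtree] at h
  | nodeA h p0 p1 ih0 ih1 =>
    intro π π' q hq
    cases π with
    | nil => simp only [subtree, Option.some.injEq] at hq; rw [← hq]; rfl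
    | cons b r =>
      cases b with
      | true => exact ih1 r π' q hq
      | false => exact ih0 r π' q hq
  | nodeB h p0 p1 ih0 ih1 =>
    intro π π' q hq
    cases π with
    | nil => simp only [subtree, Option.some.injEq] at hq; rw [← hq]; rfl
    | cons b r =>
      cases b with
      | true => exact ih1 r π' q hq
      | false => exact ih0 r π' q hq

lemma exists_path (p : Protocol X Y O) : ∃ π, π.length = p.depth ∧ (subtree p π).isSome = true := by
  induction p with
  | leaf o => exact ⟨[], rfl, rfl⟩
  | nodeA h p0 p1 ih0 ih1 =>
    obtain ⟨π0, l0, h0⟩ := ih0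
    obtain ⟨π1, l1, h1⟩ := ih1
    rcases le_total p0.depth p1.depth with hle | hle
    · exact ⟨true :: π1, by simp [depth, l1, hle], by simpa [subtree] using h1⟩
    · exact ⟨false :: π0, by simp [depth, l0, hle], by simpa [subtree] using h0⟩
  | nodeB h p0 p1 ih0 ih1 =>
    obtain ⟨π0, l0, h0⟩ := ih0
    obtain ⟨π1, l1, h1⟩ := ih1
    rcases le_total p0.depth p1.depth with hle | hle
    · exact ⟨true :: π1, by simp [depth, l1, hle], by simpa [subtree] using h1⟩
    · exact ⟨false :: π0, by simp [depth, l0, hle], by simpa [subtree] using h0⟩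

end Protocol

lemma two_rpow_pow (x : ℝ) (k : ℕ) : ((2 : ℝ) ^ x) ^ k = (2 : ℝ) ^ (x * k) := by
  rw [Real.rpow_mul (by norm_num), Real.rpow_natCast]

lemma two_rpow_add (x y : ℝ) : (2 : ℝ) ^ x * (2 : ℝ) ^ y = (2 : ℝ) ^ (x + y) :=
  (Real.rpow_add (by norm_num) x y).symm

lemma par_exists (η : ℝ) (hη : 0 < η) (k₀ : ℕ) (hk₀ : 1 ≤ k₀) (hk₀η : 12 / η ≤ k₀)
    (N : Type) [Fintype N] (n t : ℕ) (hn : 2 ≤ n) (hnN : Fintype.card N ≤ n)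
    (gd : (Fin t → Bool) → (Fin t → Bool) → Bool)
    (hdisc : disc gd ≤ (2 : ℝ) ^ (-(η * (t : ℝ))))
    (ht : 4 * (3 * (k₀ : ℝ) + 18) * Real.logb 2 n ≤ η * t) :
    ∃ C, Par gd C N n k₀ ((2 : ℝ) ^ (-(t : ℝ) + η * t / 6)) ((2 : ℝ) ^ ((t : ℝ) / k₀)) := by
  have hcard : (Fintype.card (Fin t → Bool) : ℝ) = (2 : ℝ) ^ (t : ℝ) := by
    simp
  have h2t : (2 : ℝ) ^ t = (2 : ℝ) ^ (t : ℝ) := (Real.rpow_natCast 2 t).symm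
  set a := η * (t : ℝ) with ha
  set lg := Real.logb 2 (n : ℝ) with hlg
  have hn' : (2 : ℝ) ≤ n := by exact_mod_cast hn
  have hlg1 : 1 ≤ lg := by
    rw [hlg, Real.le_logb_iff_rpow_le (by norm_num) (by linarith)]
    simpa using hn'
  have hnlg : (n : ℝ) = (2 : ℝ) ^ lg := (Real.rpow_logb (by norm_num) (by norm_num) (by linarith)).symm
  have hk₀' : (1 : ℝ) ≤ k₀ := by exact_mod_cast hk₀
  set C : ℝ := (2 : ℝ) ^ ((4 - 2 * a) / 3 + 2 * t) with hC
  have hC0 : 0 ≤ C := by positivity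
  set E : ℝ := (2 : ℝ) ^ (-a + 2 * t) with hE
  have hcut : ∀ A B : Finset (Fin t → Bool), |∑ u ∈ A, ∑ v ∈ B, sg (gd u v)| ≤ E := by
    intro A B
    refine (disc_bound gd A B).trans ?_
    calc disc gd * ((2 ^ t : ℝ) * (2 ^ t : ℝ)) ≤ (2 : ℝ) ^ (-a) * ((2 ^ t : ℝ) * (2 ^ t : ℝ)) := by
          gcongr
      _ = E := by
          rw [h2t, two_rpow_add, two_rpow_add, hE]; ring_nf
  have hCE : 16 * E ^ 2 * (Fintype.card (Fin t → Bool) : ℝ) ^ 2 ≤ C ^ 3 := by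
    rw [hcard, hE, hC, two_rpow_pow, two_rpow_pow, two_rpow_pow,
      show (16 : ℝ) = (2 : ℝ) ^ (4 : ℝ) by norm_num, two_rpow_add, two_rpow_add]
    apply le_of_eq
    congr 1
    push_cast
    ring
  refine ⟨C, hC0, ?_, ?_, by positivity, by omega, hnN, hk₀, ?_, ?_, ?_⟩
  · exact fun q => l2_bound _ E C hcut (fun u v => (sg_abs _).le) hC0 hCE q
  · refine fun q => l2_bound (fun u v => sg (gd v u)) E C (fun A B => ?_) (fun u v => (sg_abs _).le) hC0 hCE q
    rw [Finset.sum_comm]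
    exact hcut B A
  · exact Real.one_le_rpow (by norm_num) (by positivity)
  · rw [hcard, two_rpow_pow, div_mul_cancel₀ _ (by linarith)]
  · have h4n : (4 * n : ℝ) ≤ (2 : ℝ) ^ (3 * lg) := by
      have : (2 : ℝ) ^ (3 * lg) = (n : ℝ) ^ 3 := by
        rw [hnlg, two_rpow_pow]; push_cast; ring_nf
      rw [this]
      have h4 : (4 : ℝ) ≤ (n : ℝ) ^ 2 := by nlinarith
      have h41 := mul_le_mul_of_nonneg_right h4 (show (0 : ℝ) ≤ n by positivity)
      calc (4 * n : ℝ) ≤ (n : ℝ) ^ 2 * n := h41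
        _ = (n : ℝ) ^ 3 := by ring
    have h5 : ((4 : ℝ) * n) ^ (k₀ + 4) ≤ (2 : ℝ) ^ (3 * lg * (k₀ + 4)) := by
      calc ((4 : ℝ) * n) ^ (k₀ + 4) ≤ ((2 : ℝ) ^ (3 * lg)) ^ (k₀ + 4) := by gcongr
        _ = _ := by rw [two_rpow_pow]; push_cast; ring_nf
    have h6 : (12 : ℝ) ≤ (2 : ℝ) ^ (4 : ℝ) := by norm_num
    have htk : (t : ℝ) / k₀ ≤ a / 12 := by
      rw [div_le_iff₀ (by linarith)]
      rw [div_le_iff₀ hη] at hk₀η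
      have : (0 : ℝ) ≤ t := by positivity
      rw [ha]
      nlinarith
    have h7 : (2 : ℝ) ^ ((t : ℝ) / k₀) ≤ (2 : ℝ) ^ (a / 12) :=
      Real.rpow_le_rpow_of_exponent_le (by norm_num) htk
    calc (4 * n : ℝ) * (2 : ℝ) ^ ((t : ℝ) / k₀) * (3 * (4 * n) ^ k₀) * C *
          ((2 : ℝ) ^ (-(t : ℝ) + a / 6)) ^ 2 * (4 * n) ^ 2 * (16 * n)
        = 12 * (4 * n : ℝ) ^ (k₀ + 4) * (2 : ℝ) ^ ((t : ℝ) / k₀) *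
          (C * ((2 : ℝ) ^ (-(t : ℝ) + a / 6)) ^ 2) := by ring
      _ ≤ (2 : ℝ) ^ (4 : ℝ) * (2 : ℝ) ^ (3 * lg * (k₀ + 4)) * (2 : ℝ) ^ (a / 12) *
          (C * ((2 : ℝ) ^ (-(t : ℝ) + a / 6)) ^ 2) := by gcongr
      _ = (2 : ℝ) ^ (4 + 3 * lg * (k₀ + 4) + a / 12 + ((4 - 2 * a) / 3 + 2 * t + (-(t : ℝ) + a / 6) * 2)) := by
          rw [hC, two_rpow_pow, two_rpow_add, two_rpow_add, two_rpow_add, two_rpow_add]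
          norm_num
      _ ≤ (2 : ℝ) ^ (0 : ℝ) := by
          refine Real.rpow_le_rpow_of_exponent_le (by norm_num) ?_
          nlinarith
      _ = 1 := Real.rpow_zero 2

lemma final_count (a : ℝ) (ha : 60 ≤ a) (t q Q d : ℕ) (hQ : Q ≤ q)
    (h : 1 ≤ (8 * (4 / ((2 : ℝ) ^ (t : ℝ))) / ((2 : ℝ) ^ (-(t : ℝ) + a / 6))) ^ q * 4 ^ d) :
    a / 24 * Q ≤ d := by
  have h1 : 8 * (4 / ((2 : ℝ) ^ (t : ℝ))) / ((2 : ℝ) ^ (-(t : ℝ) + a / 6)) = (2 : ℝ) ^ (5 - a / 6) := by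
    rw [div_eq_iff (by positivity), mul_div_assoc', div_eq_iff (by positivity), two_rpow_add, two_rpow_add]
    rw [show 5 - a / 6 + (-(t : ℝ) + a / 6) + t = (5 : ℝ) by ring]
    norm_num
  have h2 : (4 : ℝ) ^ d = (2 : ℝ) ^ (2 * (d : ℝ)) := by
    rw [Real.rpow_mul (by norm_num), Real.rpow_natCast]; norm_num
  rw [h1, h2, two_rpow_pow, two_rpow_add] at h
  have h3 : 0 ≤ (5 - a / 6) * q + 2 * d := by
    by_contra hneg
    push Not at hneg
    have := Real.rpow_lt_one_of_one_lt_of_neg (x := 2) (by norm_num) hneg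
    linarith
  have hQ' : (Q : ℝ) ≤ q := by exact_mod_cast hQ
  have hq0 : (0 : ℝ) ≤ Q := by positivity
  nlinarith

/-- the core: from a live transcript to a lower bound on the depth of the subtree -/
lemma core (η : ℝ) (hη : 0 < η) (k₀ : ℕ) (hk₀ : 1 ≤ k₀) (hk₀η : 12 / η ≤ k₀)
    (m ℓ t : ℕ) (hℓ : 1 ≤ ℓ) (O : Type) (f : (Fin m → Bool) → Bool) (S : (Fin ℓ → Bool) → O → Prop)
    (gd : (Fin t → Bool) → (Fin t → Bool) → Bool)
    (hmono : Monotone f) (h1 : ∃ x, f x = true) (h0 : ∃ x, f x = false)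
    (hdisc : disc gd ≤ (2 : ℝ) ^ (-(η * (t : ℝ))))
    (ht : 4 * (3 * (k₀ : ℝ) + 18) * Real.logb 2 ((m : ℝ) * (ℓ : ℝ)) ≤ η * t)
    (Pr : Protocol
            ((Fin m → Fin ℓ → (Fin t → Bool)) × {a : Fin m → Bool // f a = true})
            ((Fin m → Fin ℓ → (Fin t → Bool)) × {b : Fin m → Bool // f b = false})
            (Fin m × O))
    (hsol : Solves Pr (starLift f S gd)) (π₁ : List Bool)
    (hγ : 4 * (m : ℝ) ^ 2 ≤ gammaM f Pr π₁)
    (p : Protocol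
            ((Fin m → Fin ℓ → (Fin t → Bool)) × {a : Fin m → Bool // f a = true})
            ((Fin m → Fin ℓ → (Fin t → Bool)) × {b : Fin m → Bool // f b = false})
            (Fin m × O))
    (hp : Protocol.subtree Pr π₁ = some p) :
    η * t / 24 * Qcomplexity S ≤ p.depth := by
  obtain ⟨x1, hx1⟩ := h1
  obtain ⟨x0, hx0⟩ := h0
  have hne : Nonempty (Fin m) := by
    by_contra hemp
    rw [not_nonempty_iff] at hemp
    have : x1 = x0 := Subsingleton.elim _ _
    rw [this, hx0] at hx1
    exact absurd hx1 (by simp)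
  let cur : (Fin m × Fin ℓ → (Fin t → Bool)) ≃ (Fin m → Fin ℓ → (Fin t → Bool)) :=
    Equiv.curry (Fin m) (Fin ℓ) (Fin t → Bool)
  let 𝒜0 : (Fin m × Fin ℓ → (Fin t → Bool)) → Set (Fin m → Bool) := fun W => Aset f Pr π₁ (cur W)
  let ℬ0 : (Fin m × Fin ℓ → (Fin t → Bool)) → Set (Fin m → Bool) := fun W => Bset f Pr π₁ (cur W)
  have hsep : ∀ W, SepRect (𝒜0 W) (ℬ0 W) := by
    rintro W a ⟨ha, _⟩ b ⟨hb, _⟩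
    by_contra hno
    push Not at hno
    have hle : a ≤ b := by
      intro i
      have := hno i
      cases hai : a i with
      | false => exact Bool.false_le _
      | true =>
        cases hbi : b i with
        | true => exact le_refl _
        | false => exact absurd hbi (this hai)
    have := hmono hle
    rw [ha, hb] at this
    exact absurd this (by decide)
  have hγ' : 4 * m ^ 2 * Fintype.card (Fin m × Fin ℓ → (Fin t → Bool)) ≤ ∑ W, mL (𝒜0 W) (ℬ0 W) := by
    unfold gammaM at hγ
    rw [le_div_iff₀ (by exact_mod_cast Fintype.card_pos), ← Equiv.sum_comp cur,
      ← Fintype.card_congr cur] at hγ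
    exact_mod_cast hγ
  obtain ⟨hm2, R, V, aW, bW, hVne, haW, hbW, hRab, hdense⟩ := hard_collection 𝒜0 ℬ0 hsep hγ'
  have hn2 : 2 ≤ m * ℓ := by nlinarith
  have hcast : (m : ℝ) * (ℓ : ℝ) = ((m * ℓ : ℕ) : ℝ) := by push_cast; ring
  rw [hcast] at ht
  obtain ⟨C, hPar⟩ := par_exists η hη k₀ hk₀ hk₀η (Fin m × Fin ℓ) (m * ℓ) t hn2 (by simp) gd hdisc ht
  have hlg1 : 1 ≤ Real.logb 2 ((m * ℓ : ℕ) : ℝ) := by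
    have : (2 : ℝ) ≤ ((m * ℓ : ℕ) : ℝ) := by exact_mod_cast hn2
    rw [Real.le_logb_iff_rpow_le (by norm_num) (by linarith)]
    simpa using this
  have hk₀' : (0 : ℝ) ≤ k₀ := by positivity
  have ha60 : 60 ≤ η * t := by nlinarith
  have hcard : (Fintype.card (Fin t → Bool) : ℝ) = (2 : ℝ) ^ (t : ℝ) := by
    simp
  rw [hcard] at hdense
  let φA : (Fin m × Fin ℓ → (Fin t → Bool)) →
      (Fin m → Fin ℓ → (Fin t → Bool)) × {a : Fin m → Bool // f a = true} :=
    fun W => (cur W, if h : f (aW W) = true then ⟨aW W, h⟩ else ⟨x1, hx1⟩)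
  let φB : (Fin m × Fin ℓ → (Fin t → Bool)) →
      (Fin m → Fin ℓ → (Fin t → Bool)) × {b : Fin m → Bool // f b = false} :=
    fun W => (cur W, if h : f (bW W) = false then ⟨bW W, h⟩ else ⟨x0, hx0⟩)
  have hrun : ∀ W ∈ V, ∀ W' ∈ V,
      (aW W ((p.comap φA φB).run W W').1 = true ∧ bW W' ((p.comap φA φB).run W W').1 = false) ∧
      S (fun j => gd (W (((p.comap φA φB).run W W').1, j)) (W' (((p.comap φA φB).run W W').1, j)))
        ((p.comap φA φB).run W W').2 := by
    intro W hW W' hW'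
    obtain ⟨ha, hfa⟩ := haW W hW
    obtain ⟨hb, hfb⟩ := hbW W' hW'
    have hA : φA W = (cur W, ⟨aW W, ha⟩) := by simp only [φA, dif_pos ha]
    have hB : φB W' = (cur W', ⟨bW W', hb⟩) := by simp only [φB, dif_pos hb]
    rw [Protocol.comap_run, hA, hB, ← Protocol.run_subtree Pr π₁ p hp _ _ hfa hfb]
    obtain ⟨s1, s2, s3⟩ := hsol (cur W, ⟨aW W, ha⟩) (cur W', ⟨bW W', hb⟩)
    exact ⟨⟨s1, s2⟩, s3⟩
  obtain ⟨q, hq, hcount⟩ := lift_count S gd C (m * ℓ) k₀ _ _ (4 / (2 : ℝ) ^ (t : ℝ)) hPar R V hVne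
    (by positivity) (by
      rw [div_le_iff₀ (by positivity), two_rpow_add]
      calc (4 : ℝ) = (2 : ℝ) ^ (2 : ℝ) := by norm_num
        _ ≤ _ := Real.rpow_le_rpow_of_exponent_le (by norm_num) (by linarith)) hdense
    (p.comap φA φB) (fun W hW W' hW' => ⟨fun hR => hRab W hW W' hW' _ hR (hrun W hW W' hW').1,
      (hrun W hW W' hW').2⟩)
  rw [Protocol.comap_depth] at hcount
  exact final_count (η * t) ha60 t q (Qcomplexity S) p.depth hq hcount

end


/-- Structure theorem.  For every `η > 0` there exist `c ∈ ℕ` and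
`κ > 0` such that: for every protocol `Pr` solving `mKW_f ⊛ (S ◇ gd)` and every live
transcript `π₁` of `Pr`, there is a suffix `π₂` of length at least `κ·Q(S)·t` such
that `π₁ ∘ π₂` is a transcript of `Pr`. -/
theorem structure_theorem (η : ℝ) (hη : 0 < η) :
    ∃ (c : ℕ) (κ : ℝ), 0 < κ ∧
      ∀ (m ℓ t : ℕ) (O : Type)
        (f : (Fin m → Bool) → Bool) (S : (Fin ℓ → Bool) → O → Prop)
        (gd : (Fin t → Bool) → (Fin t → Bool) → Bool),
        Monotone f → (∃ x, f x = true) → (∃ x, f x = false) →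
        (∀ z, ∃ o, S z o) →
        disc gd ≤ (2 : ℝ) ^ (-(η * (t : ℝ))) →
        (c : ℝ) * Real.logb 2 ((m : ℝ) * (ℓ : ℝ)) ≤ (t : ℝ) →
        ∀ (Pr : Protocol
            ((Fin m → Fin ℓ → (Fin t → Bool)) × {a : Fin m → Bool // f a = true})
            ((Fin m → Fin ℓ → (Fin t → Bool)) × {b : Fin m → Bool // f b = false})
            (Fin m × O)),
          Solves Pr (starLift f S gd) →
          ∀ π₁ : List Bool, LiveT f Pr π₁ →
            ∃ π₂ : List Bool,
              κ * (Qcomplexity S : ℝ) * (t : ℝ) ≤ (π₂.length : ℝ) ∧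
              Protocol.IsTranscript Pr (π₁ ++ π₂) := by
  obtain ⟨k₀, hk₀, hk₀η⟩ : ∃ k₀ : ℕ, 1 ≤ k₀ ∧ 12 / η ≤ k₀ :=
    ⟨⌈12 / η⌉₊, Nat.one_le_ceil_iff.2 (by positivity), Nat.le_ceil _⟩
  obtain ⟨c, hc⟩ : ∃ c : ℕ, 4 * (3 * (k₀ : ℝ) + 18) / η ≤ c := exists_nat_ge _
  refine ⟨c, η / 24, by positivity, ?_⟩
  intro m ℓ t O f S gd hmono h1 h0 htot hdisc ht Pr hsol π₁ hlive
  obtain ⟨htr, hγ⟩ := hlive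
  rcases Nat.eq_zero_or_pos ℓ with rfl | hℓ
  · refine ⟨[], ?_, by simpa using htr⟩
    have hQ : Qcomplexity S = 0 := by
      obtain ⟨o, ho⟩ := htot (fun _ => false)
      refine Nat.le_zero.1 (Nat.sInf_le ⟨DTree.leaf o, fun z => ?_, rfl⟩)
      have : z = fun _ => false := Subsingleton.elim _ _
      rw [this]
      exact ho
    simp [hQ]
  obtain ⟨p, hp⟩ := Option.isSome_iff_exists.1 htr
  have hm : 1 ≤ m := by
    rcases Nat.eq_zero_or_pos m with rfl | h
    · obtain ⟨x1, hx1⟩ := h1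
      obtain ⟨x0, hx0⟩ := h0
      rw [Subsingleton.elim x1 x0, hx0] at hx1
      exact absurd hx1 (by simp)
    · exact h
  have hlg : 0 ≤ Real.logb 2 ((m : ℝ) * (ℓ : ℝ)) := by
    apply Real.logb_nonneg (by norm_num)
    have hm' : (1 : ℝ) ≤ m := by exact_mod_cast hm
    have hℓ' : (1 : ℝ) ≤ ℓ := by exact_mod_cast hℓ
    nlinarith
  have ht' : 4 * (3 * (k₀ : ℝ) + 18) * Real.logb 2 ((m : ℝ) * (ℓ : ℝ)) ≤ η * t := by
    rw [div_le_iff₀ hη] at hc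
    calc 4 * (3 * (k₀ : ℝ) + 18) * Real.logb 2 ((m : ℝ) * (ℓ : ℝ))
        ≤ (c * η) * Real.logb 2 ((m : ℝ) * (ℓ : ℝ)) := mul_le_mul_of_nonneg_right hc hlg
      _ = η * (c * Real.logb 2 ((m : ℝ) * (ℓ : ℝ))) := by ring
      _ ≤ η * t := mul_le_mul_of_nonneg_left ht hη.le
  have hd := core η hη k₀ hk₀ hk₀η m ℓ t hℓ O f S gd hmono h1 h0 hdisc ht' Pr hsol π₁ hγ p hp
  obtain ⟨π₂, hlen, hsome⟩ := Protocol.exists_path p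
  refine ⟨π₂, ?_, ?_⟩
  · rw [hlen]
    calc η / 24 * (Qcomplexity S : ℝ) * (t : ℝ) = η * t / 24 * Qcomplexity S := by ring
      _ ≤ _ := hd
  · unfold Protocol.IsTranscript
    rw [Protocol.subtree_append Pr π₁ π₂ p hp]
    exact hsome
end

section
/- Let f : {0,1}^m → {0,1} be a non-constant monotone function with L(mKW_f) ≥ 4m², let S ⊆ {0,1}^ℓ × 𝒪 be a search problem, gd : Λ×Λ → {0,1} a gadget with Λ = {0,1}^t, and let Π be any protocol that solves mKW_f ⊛ (S◇gd). Then Π has either a live transcript of length exactly ⌊log₂ L(mKW_f) − 2·log₂ m − 2⌋, or a live transcript that is a leaf. -/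
open Classical

namespace LiveAux

variable {X Y O X' Y' : Type}

/-- Pull a protocol back along partial maps of the inputs. -/
def pull (g : X → Option X') (h : Y → Option Y') : Protocol X' Y' O → Protocol X Y O
  | .leaf o => .leaf o
  | .nodeA u p0 p1 => .nodeA (fun x => (g x).elim false u) (pull g h p0) (pull g h p1)
  | .nodeB u p0 p1 => .nodeB (fun y => (h y).elim false u) (pull g h p0) (pull g h p1)

theorem pull_leaves (g : X → Option X') (h : Y → Option Y') (p : Protocol X' Y' O) :
    (pull g h p).leaves = p.leaves := by
  induction p <;> simp_all [pull, Protocol.leaves]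

theorem pull_run (g : X → Option X') (h : Y → Option Y') (p : Protocol X' Y' O)
    {x : X} {y : Y} {x' : X'} {y' : Y'} (hx : g x = some x') (hy : h y = some y') :
    (pull g h p).run x y = p.run x' y' := by
  induction p <;> simp_all [pull, Protocol.run]

theorem Lsize_le {S : X → Y → O → Prop} (p : Protocol X Y O) (hp : Solves p S) :
    Lsize S ≤ p.leaves := Nat.sInf_le ⟨p, hp, rfl⟩

theorem exists_opt {S : X → Y → O → Prop} (p : Protocol X Y O) (hp : Solves p S) :
    ∃ q : Protocol X Y O, Solves q S ∧ q.leaves = Lsize S :=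
  Nat.sInf_mem (s := {k | ∃ p : Protocol X Y O, Solves p S ∧ p.leaves = k}) ⟨_, p, hp, rfl⟩

/-- Partial inclusion map of a set into another one. -/
noncomputable def inc {α : Type} (A A' : Set α) (x : A) : Option A' :=
  if h : x.val ∈ A' then some ⟨x.val, h⟩ else none

theorem mL_subadd_A {ι : Type} {A A0 A1 B : Set (ι → Bool)}
    (hA : ∀ a ∈ A, a ∈ A0 ∨ a ∈ A1)
    (p0 : Protocol A0 B ι) (h0 : Solves p0 (mKWrect A0 B))
    (p1 : Protocol A1 B ι) (h1 : Solves p1 (mKWrect A1 B)) :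
    mL A B ≤ mL A0 B + mL A1 B := by
  obtain ⟨q0, hq0, e0⟩ := exists_opt p0 h0
  obtain ⟨q1, hq1, e1⟩ := exists_opt p1 h1
  unfold mL
  rw [← e0, ← e1]
  have := Lsize_le (S := mKWrect A B)
    (.nodeA (fun x => decide (x.val ∈ A1)) (pull (inc A A0) some q0) (pull (inc A A1) some q1)) ?_
  · simpa [Protocol.leaves, pull_leaves] using this
  · intro x y
    by_cases hx : x.val ∈ A1
    · have := hq1 ⟨x.val, hx⟩ y
      simp only [Protocol.run, hx, decide_true, if_true]
      rw [pull_run (x' := ⟨x.val, hx⟩) (y' := y) _ _ _ (by simp [inc, hx]) rfl]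
      exact this
    · have hx0 := (hA x.val x.2).resolve_right hx
      have := hq0 ⟨x.val, hx0⟩ y
      simp only [Protocol.run, hx, decide_false]
      rw [if_neg (by simp)]
      rw [pull_run (x' := ⟨x.val, hx0⟩) (y' := y) _ _ _ (by simp [inc, hx0]) rfl]
      exact this

theorem mL_subadd_B {ι : Type} {A B B0 B1 : Set (ι → Bool)}
    (hB : ∀ b ∈ B, b ∈ B0 ∨ b ∈ B1)
    (p0 : Protocol A B0 ι) (h0 : Solves p0 (mKWrect A B0))
    (p1 : Protocol A B1 ι) (h1 : Solves p1 (mKWrect A B1)) :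
    mL A B ≤ mL A B0 + mL A B1 := by
  obtain ⟨q0, hq0, e0⟩ := exists_opt p0 h0
  obtain ⟨q1, hq1, e1⟩ := exists_opt p1 h1
  unfold mL
  rw [← e0, ← e1]
  have := Lsize_le (S := mKWrect A B)
    (.nodeB (fun x => decide (x.val ∈ B1)) (pull some (inc B B0) q0) (pull some (inc B B1) q1)) ?_
  · simpa [Protocol.leaves, pull_leaves] using this
  · intro x y
    by_cases hy : y.val ∈ B1
    · have := hq1 x ⟨y.val, hy⟩
      simp only [Protocol.run, hy, decide_true, if_true]
      rw [pull_run (x' := x) (y' := ⟨y.val, hy⟩) _ _ _ rfl (by simp [inc, hy])]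
      exact this
    · have hy0 := (hB y.val y.2).resolve_right hy
      have := hq0 x ⟨y.val, hy0⟩
      simp only [Protocol.run, hy, decide_false]
      rw [if_neg (by simp)]
      rw [pull_run (x' := x) (y' := ⟨y.val, hy0⟩) _ _ _ rfl (by simp [inc, hy0])]
      exact this

/-- Restricting a protocol for `mKW f` to a subrectangle. -/
theorem rect_solvable {ι : Type} {f : (ι → Bool) → Bool} (p : Protocol _ _ ι)
    (hp : Solves p (mKW f)) {A B : Set (ι → Bool)} (hA : ∀ a ∈ A, f a = true)
    (hB : ∀ b ∈ B, f b = false) : ∃ q : Protocol A B ι, Solves q (mKWrect A B) := by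
  refine ⟨pull (fun a => some ⟨a.val, hA _ a.2⟩) (fun b => some ⟨b.val, hB _ b.2⟩) p, ?_⟩
  intro a b
  rw [pull_run (x := a) (y := b) (x' := ⟨a.val, hA _ a.2⟩) (y' := ⟨b.val, hB _ b.2⟩)
    (fun a : A => some (⟨a.val, hA _ a.2⟩ : {x // f x = true}))
    (fun b : B => some (⟨b.val, hB _ b.2⟩ : {y // f y = false})) p rfl rfl]
  exact hp ⟨a.val, hA _ a.2⟩ ⟨b.val, hB _ b.2⟩

theorem Lsize_le_mL {ι : Type} {f : (ι → Bool) → Bool} (p : Protocol _ _ ι)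
    (hp : Solves p (mKW f)) {A B : Set (ι → Bool)} (hA : ∀ a, a ∈ A ↔ f a = true)
    (hB : ∀ b, b ∈ B ↔ f b = false) : Lsize (mKW f) ≤ mL A B := by
  obtain ⟨q, hq⟩ := rect_solvable p hp (fun a => (hA a).1) (fun b => (hB b).1)
  obtain ⟨q, hq, e⟩ := exists_opt q hq
  unfold mL
  rw [← e]
  have := Lsize_le (S := mKW f)
    (pull (fun a => some ⟨a.val, (hA _).2 a.2⟩) (fun b => some ⟨b.val, (hB _).2 b.2⟩) q) ?_
  · simpa [pull_leaves] using this
  · intro a b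
    rw [pull_run (x := a) (y := b) (x' := ⟨a.val, (hA _).2 a.2⟩) (y' := ⟨b.val, (hB _).2 b.2⟩)
      (fun a : {x // f x = true} => some (⟨a.val, (hA _).2 a.2⟩ : A))
      (fun b : {y // f y = false} => some (⟨b.val, (hB _).2 b.2⟩ : B)) q rfl rfl]
    exact hq ⟨a.val, (hA _).2 a.2⟩ ⟨b.val, (hB _).2 b.2⟩

theorem subtree_append (p q : Protocol X Y O) (π : List Bool) (h : p.subtree π = some q)
    (b : Bool) : p.subtree (π ++ [b]) = q.subtree [b] := by
  induction π generalizing p with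
  | nil => simp [Protocol.subtree] at h; simp [h]
  | cons c π ih =>
    cases p <;> cases c <;> simp_all [Protocol.subtree]

theorem followsA_append (p q : Protocol X Y O) (π : List Bool) (h : p.subtree π = some q)
    (b : Bool) (x : X) :
    p.followsA (π ++ [b]) x ↔ p.followsA π x ∧ q.followsA [b] x := by
  induction π generalizing p with
  | nil => simp [Protocol.subtree] at h; simp [h, Protocol.followsA]
  | cons c π ih =>
    cases p <;> cases c <;> simp_all [Protocol.subtree, Protocol.followsA, and_assoc]

theorem followsB_append (p q : Protocol X Y O) (π : List Bool) (h : p.subtree π = some q)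
    (b : Bool) (x : Y) :
    p.followsB (π ++ [b]) x ↔ p.followsB π x ∧ q.followsB [b] x := by
  induction π generalizing p with
  | nil => simp [Protocol.subtree] at h; simp [h, Protocol.followsB]
  | cons c π ih =>
    cases p <;> cases c <;> simp_all [Protocol.subtree, Protocol.followsB, and_assoc]

section
variable {m ℓ : ℕ} {Λ : Type} {f : (Fin m → Bool) → Bool}
    {Pr : Protocol ((Fin m → Fin ℓ → Λ) × {a : Fin m → Bool // f a = true})
                   ((Fin m → Fin ℓ → Λ) × {b : Fin m → Bool // f b = false}) (Fin m × O)}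

theorem mL_step (p : Protocol _ _ (Fin m)) (hp : Solves p (mKW f)) {π : List Bool} {q}
    (hq : Pr.subtree π = some q) (hleaf : ∀ o, q ≠ .leaf o) (W : Fin m → Fin ℓ → Λ) :
    mL (Aset f Pr π W) (Bset f Pr π W) ≤
      mL (Aset f Pr (π ++ [false]) W) (Bset f Pr (π ++ [false]) W) +
      mL (Aset f Pr (π ++ [true]) W) (Bset f Pr (π ++ [true]) W) := by
  have sol : ∀ π π', ∃ r : Protocol (Aset f Pr π W) (Bset f Pr π' W) (Fin m),
      Solves r (mKWrect (Aset f Pr π W) (Bset f Pr π' W)) := fun π π' =>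
    rect_solvable p hp (fun a ha => ha.1) (fun b hb => hb.1)
  cases q with
  | leaf o => exact absurd rfl (hleaf o)
  | nodeA u p0 p1 =>
    have hB : ∀ b, Bset f Pr (π ++ [b]) W = Bset f Pr π W := by
      intro b
      ext y
      simp [Bset, followsB_append _ _ _ hq, Protocol.followsB]
    rw [hB, hB]
    obtain ⟨r0, h0⟩ := sol (π ++ [false]) π
    obtain ⟨r1, h1⟩ := sol (π ++ [true]) π
    refine mL_subadd_A ?_ r0 h0 r1 h1
    rintro a ⟨ha, hfol⟩
    cases hu : u (W, ⟨a, ha⟩)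
    · left; exact ⟨ha, by simp [followsA_append _ _ _ hq, Protocol.followsA, hfol, hu]⟩
    · right; exact ⟨ha, by simp [followsA_append _ _ _ hq, Protocol.followsA, hfol, hu]⟩
  | nodeB u p0 p1 =>
    have hA : ∀ b, Aset f Pr (π ++ [b]) W = Aset f Pr π W := by
      intro b
      ext y
      simp [Aset, followsA_append _ _ _ hq, Protocol.followsA]
    rw [hA, hA]
    obtain ⟨r0, h0⟩ := sol π (π ++ [false])
    obtain ⟨r1, h1⟩ := sol π (π ++ [true])
    refine mL_subadd_B ?_ r0 h0 r1 h1
    rintro a ⟨ha, hfol⟩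
    cases hu : u (W, ⟨a, ha⟩)
    · left; exact ⟨ha, by simp [followsB_append _ _ _ hq, Protocol.followsB, hfol, hu]⟩
    · right; exact ⟨ha, by simp [followsB_append _ _ _ hq, Protocol.followsB, hfol, hu]⟩

theorem gamma_step [Fintype Λ] [DecidableEq Λ] (p : Protocol _ _ (Fin m))
    (hp : Solves p (mKW f)) {π : List Bool} {q}
    (hq : Pr.subtree π = some q) (hleaf : ∀ o, q ≠ .leaf o) :
    gammaM f Pr π ≤ gammaM f Pr (π ++ [false]) + gammaM f Pr (π ++ [true]) := by
  unfold gammaM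
  rw [← add_div, ← Finset.sum_add_distrib]
  gcongr with W
  exact_mod_cast mL_step p hp hq hleaf W

theorem gamma_nil [Fintype Λ] [DecidableEq Λ] [Nonempty Λ] (p : Protocol _ _ (Fin m))
    (hp : Solves p (mKW f)) : (Lsize (mKW f) : ℝ) ≤ gammaM f Pr [] := by
  unfold gammaM
  rw [le_div_iff₀ (by exact_mod_cast Fintype.card_pos)]
  have : ∑ W : Fin m → Fin ℓ → Λ, (Lsize (mKW f) : ℝ) ≤
      ∑ W : Fin m → Fin ℓ → Λ, (mL (Aset f Pr [] W) (Bset f Pr [] W) : ℝ) := by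
    gcongr with W
    exact Lsize_le_mL p hp (by simp [Aset, Protocol.followsA]) (by simp [Bset, Protocol.followsB])
  rw [Finset.sum_const, Finset.card_univ, nsmul_eq_mul] at this
  linarith

theorem descend [Fintype Λ] [DecidableEq Λ] [Nonempty Λ] (p : Protocol _ _ (Fin m))
    (hp : Solves p (mKW f)) (d : ℕ) :
    ∃ π : List Bool, Pr.IsTranscript π ∧ (Lsize (mKW f) : ℝ) / 2 ^ d ≤ gammaM f Pr π ∧
      (π.length = d ∨ Pr.IsFullTranscript π) := by
  induction d with
  | zero => exact ⟨[], by simp [Protocol.IsTranscript, Protocol.subtree],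
      by simpa using gamma_nil p hp, Or.inl rfl⟩
  | succ d ih =>
    obtain ⟨π, ht, hg, h⟩ := ih
    have hmono : (Lsize (mKW f) : ℝ) / 2 ^ (d + 1) ≤ (Lsize (mKW f) : ℝ) / 2 ^ d := by
      gcongr <;> norm_num
    by_cases hfull : Pr.IsFullTranscript π
    · exact ⟨π, ht, hmono.trans hg, Or.inr hfull⟩
    have hlen := h.resolve_right hfull
    obtain ⟨q, hq⟩ := Option.isSome_iff_exists.1 ht
    have hleaf : ∀ o, q ≠ .leaf o := fun o ho => hfull ⟨o, by rw [hq, ho]⟩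
    have hstep := gamma_step p hp hq hleaf
    have htr : ∀ b, Pr.IsTranscript (π ++ [b]) := by
      intro b
      unfold Protocol.IsTranscript
      rw [subtree_append _ _ _ hq]
      cases q with
      | leaf o => exact absurd rfl (hleaf o)
      | nodeA u p0 p1 => cases b <;> simp [Protocol.subtree]
      | nodeB u p0 p1 => cases b <;> simp [Protocol.subtree]
    have hhalf : (Lsize (mKW f) : ℝ) / 2 ^ (d + 1) = (Lsize (mKW f) : ℝ) / 2 ^ d / 2 := by
      rw [pow_succ, div_div]
    rcases le_or_gt ((Lsize (mKW f) : ℝ) / 2 ^ (d + 1)) (gammaM f Pr (π ++ [false])) with h' | h'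
    · exact ⟨_, htr _, h', Or.inl (by simp [hlen])⟩
    · exact ⟨_, htr true, by linarith, Or.inl (by simp [hlen])⟩

end

end LiveAux

/-- If `L(mKW_f) ≥ 4m²`, then every protocol solving
`mKW_f ⊛ (S ◇ gd)` has either a live transcript of length exactly
`⌊log₂ L(mKW_f) − 2·log₂ m − 2⌋`, or a live transcript that is a leaf. -/
theorem live_transcript_exists (m ℓ t : ℕ) (O : Type)
    (f : (Fin m → Bool) → Bool) (S : (Fin ℓ → Bool) → O → Prop)
    (gd : (Fin t → Bool) → (Fin t → Bool) → Bool)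
    (hf : Monotone f) (hf1 : ∃ x, f x = true) (hf0 : ∃ x, f x = false)
    (hL : 4 * m ^ 2 ≤ Lsize (mKW f))
    (Pr : Protocol
        ((Fin m → Fin ℓ → (Fin t → Bool)) × {a : Fin m → Bool // f a = true})
        ((Fin m → Fin ℓ → (Fin t → Bool)) × {b : Fin m → Bool // f b = false})
        (Fin m × O))
    (hPr : Solves Pr (starLift f S gd)) :
    ∃ π : List Bool, LiveT f Pr π ∧
      (((π.length : ℤ) =
          ⌊Real.logb 2 ((Lsize (mKW f) : ℝ)) - 2 * Real.logb 2 (m : ℝ) - 2⌋) ∨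
        Protocol.IsFullTranscript Pr π) := by
  have hm : 1 ≤ m := by
    rcases Nat.eq_zero_or_pos m with rfl | h
    · obtain ⟨x, hx⟩ := hf1
      obtain ⟨y, hy⟩ := hf0
      rw [Subsingleton.elim x y, hy] at hx
      exact absurd hx (by simp)
    · exact h
  have hLpos : 0 < Lsize (mKW f) := lt_of_lt_of_le (by positivity) hL
  obtain ⟨_, p, hp, _⟩ := Nat.nonempty_of_pos_sInf hLpos
  have hLR : (4 : ℝ) * (m : ℝ) ^ 2 ≤ Lsize (mKW f) := by exact_mod_cast hL
  have hmR : (0 : ℝ) < m := by exact_mod_cast hm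
  have hLR0 : (0 : ℝ) < Lsize (mKW f) := by exact_mod_cast hLpos
  have hlog : Real.logb 2 ((4 : ℝ) * (m : ℝ) ^ 2) = 2 + 2 * Real.logb 2 m := by
    rw [Real.logb_mul (by norm_num) (by positivity), Real.logb_pow]
    rw [show (4 : ℝ) = 2 ^ 2 by norm_num, Real.logb_pow, Real.logb_self_eq_one (by norm_num)]
    norm_num
  have hle := Real.logb_le_logb_of_le (b := 2) (by norm_num) (by positivity) hLR
  set r := Real.logb 2 ((Lsize (mKW f) : ℝ)) - 2 * Real.logb 2 (m : ℝ) - 2 with hr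
  have hr0 : 0 ≤ r := by linarith
  obtain ⟨d, hd⟩ := Int.eq_ofNat_of_zero_le (Int.floor_nonneg.2 hr0)
  have hdr : (d : ℝ) ≤ r := by
    have := Int.floor_le r
    rw [hd] at this
    exact_mod_cast this
  have hpow : 4 * (m : ℝ) ^ 2 ≤ (Lsize (mKW f) : ℝ) / 2 ^ d := by
    rw [le_div_iff₀ (by positivity)]
    rw [← Real.logb_le_logb (b := 2) (by norm_num) (by positivity) hLR0,
      Real.logb_mul (by positivity) (by positivity), hlog, Real.logb_pow,
      Real.logb_self_eq_one (by norm_num)]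
    linarith
  obtain ⟨π, ht, hg, h⟩ := LiveAux.descend (Pr := Pr) p hp d
  refine ⟨π, ⟨ht, hpow.trans hg⟩, h.imp (fun h => ?_) id⟩
  rw [hd, h]
end
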